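/- arXiv:2510.15323 — 3 statements merged into one kernel-verified Lean document; each statement's English description precedes it below -/
import Mathlib

section
/- Let $(\mathcal X_i)_{i\in\mathbb Z}$ be measurable spaces and let $(X_i)_{i\in\mathbb Z}$ be a time-inhomogeneous Markov chain, $X_i$ taking values in $\mathcal X_i$, with one-step transition probabilities $P_i(x,\cdot)$ from $\mathcal X_i$ to $\mathcal X_{i+1}$ and $n$-step transition probabilities $P_{i,n}=P_i\circ P_{i+1}\circ\cdots\circ P_{i+n-1}$ from $\mathcal X_i$ to $\mathcal X_{i+n}$. Suppose that there are positive integers $\ell_j$, real numbers $\gamma_i$ and probability measures $m_j$ on $\mathcal X_j$ such that for every $j\in\mathbb Z$ we have $\gamma_{j-\ell_j}\in(0,1)$ and $$P_{j-\ell_j,\ell_j}(x,\Gamma)\ge \gamma_{j-\ell_j}\,m_j(\Gamma)\qquad\text{for all }x\in\mathcal X_{j-\ell_j}\text{ and all measurable }\Gamma\subseteq\mathcal X_j .$$ Define $N_{j,0}=0$ and $N_{j,k}=N_{j,k-1}+\ell_{j-1-N_{j,k-1}}$ for $k\ge1$; thus $N_{j,1}=\ell_{j-1}$ and $N_{j,2}=\ell_{j-1}+\ell_{j-1-\ell_{j-1}}$.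 Then there are finite positive measures $A_{j,n}$ on $\mathcal X_j$, nondecreasing in $n$, such that for all $j\in\mathbb Z$, all $m\ge1$ and all $n>N_{j,m-1}$, $$\sup_{\Gamma}\sup_{x}\left|P_{j-n,n}(x,\Gamma)-A_{j,n}(\Gamma)\right|\le\prod_{k=1}^{m-1}\left(1-\gamma_{j-1-N_{j,k}}\right),$$ where the suprema are over measurable $\Gamma\subseteq\mathcal X_j$ and $x\in\mathcal X_{j-n}$. Consequently, for every $j$ such that $\prod_{k=1}^{m-1}(1-\gamma_{j-1-N_{j,k}})\to0$ as $m\to\infty$, there exists a probability measure $\mu_j$ on $\mathcal X_j$ such that for all $m\ge1$ and all $n>N_{j,m-1}$, $$\sup_{\Gamma}\sup_{x}\left|P_{j-n,n}(x,\Gamma)-\mu_j(\Gamma)\right|\le\prod_{k=1}^{m-1}\left(1-\gamma_{j-1-N_{j,k}}\right).$$ -/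
open MeasureTheory ProbabilityTheory Filter

/-- Transport along an equality of time indices. -/
def castX {𝒳 : ℤ → Type*} {a b : ℤ} (h : a = b) (x : 𝒳 a) : 𝒳 b := h ▸ x

lemma measurable_castX {𝒳 : ℤ → Type*} [∀ i, MeasurableSpace (𝒳 i)] {a b : ℤ} (h : a = b) :
    Measurable (castX (𝒳 := 𝒳) h) := by
  subst h
  exact measurable_id

/-- The `n`-step transition kernel `P_{i,n} = P_i ∘ P_{i+1} ∘ ⋯ ∘ P_{i+n-1}` (composition as
operators on functions) from time `i` to time `j = i + n`; as kernels,
`P_{i,n+1}(x, Γ) = ∫ P_{i+1,n}(y, Γ) P_i(x, dy)`, and `P_{i,0}(x, ·)` is the Dirac mass at `x`.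
The final time `j` is a separate argument, so that `P_{j-n,n}` is a kernel into `𝒳 j` itself. -/
noncomputable def nstep {𝒳 : ℤ → Type*} [∀ i, MeasurableSpace (𝒳 i)]
    (P : ∀ i : ℤ, Kernel (𝒳 i) (𝒳 (i + 1))) :
    (n : ℕ) → (i j : ℤ) → i + (n : ℤ) = j → Kernel (𝒳 i) (𝒳 j)
  | 0, i, j, h =>
      Kernel.deterministic (castX (𝒳 := 𝒳) (show i = j by simpa using h)) (measurable_castX _)
  | n + 1, i, j, h =>
      nstep P n (i + 1) j (by rw [← h]; push_cast; ring) ∘ₖ P i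

/-- The kernel `P_{j-n,n}` from time `j - n` to time `j`. -/
noncomputable def nstepTo {𝒳 : ℤ → Type*} [∀ i, MeasurableSpace (𝒳 i)]
    (P : ∀ i : ℤ, Kernel (𝒳 i) (𝒳 (i + 1))) (n : ℕ) (j : ℤ) :
    Kernel (𝒳 (j - (n : ℤ))) (𝒳 j) :=
  nstep P n (j - n) j (sub_add_cancel _ _)

/-- The total length `N_{j,k}` of the first `k` consecutive minorization blocks counted backwards
from time `j - 1`: `N_{j,0} = 0` and `N_{j,k+1} = N_{j,k} + ℓ_{j-1-N_{j,k}}`.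
The `k`-th block (`k ≥ 1`) runs from time `j - 1 - N_{j,k}` to time `j - 1 - N_{j,k-1}`. -/
def blockTime (ℓ : ℤ → ℕ) (j : ℤ) : ℕ → ℕ
  | 0 => 0
  | k + 1 => blockTime ℓ j k + ℓ (j - 1 - (blockTime ℓ j k : ℤ))

section MonotoneMeasures

variable {α : Type*} [MeasurableSpace α]

/-- A probability measure exceeds a smaller measure `ν` on any set by at most `1 - ν(α)`. -/
lemma real_sub_mem_Icc_of_le {μ ν : Measure α} [IsProbabilityMeasure μ] (h : ν ≤ μ)
    {Γ : Set α} (hΓ : MeasurableSet Γ) :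
    μ.real Γ - ν.real Γ ∈ Set.Icc 0 (1 - ν.real Set.univ) := by
  have : IsFiniteMeasure ν := isFiniteMeasure_of_le μ h
  have mono : ∀ s, ν.real s ≤ μ.real s := fun s =>
    ENNReal.toReal_mono (measure_ne_top _ _) (h s)
  have h1 := mono Γ
  have h2 := mono Γᶜ
  have h3 := measureReal_add_measureReal_compl (μ := μ) hΓ
  have h4 := measureReal_add_measureReal_compl (μ := ν) hΓ
  have h5 : μ.real Set.univ = 1 := probReal_univ
  constructor <;> linarith

/-- A nondecreasing sequence of measures, starting from `0`, whose total masses tend to `1` is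
bounded above by a probability measure. -/
lemma exists_isProbabilityMeasure_ge_of_monotone {A : ℕ → Measure α} [∀ k, IsFiniteMeasure (A k)]
    (hA : Monotone A) (h0 : A 0 = 0)
    (hlim : Tendsto (fun k => A k Set.univ) atTop (nhds 1)) :
    ∃ μ : Measure α, IsProbabilityMeasure μ ∧ ∀ k, A k ≤ μ := by
  have hsum : ∀ k s, ∑ i ∈ Finset.range k, (A (i + 1) - A i) s = A k s := by
    intro k s
    induction k with
    | zero => simp [h0]
    | succ k ih =>
      rw [Finset.sum_range_succ, ih, add_comm, ← Measure.add_apply,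
        Measure.sub_add_cancel_of_le (hA k.le_succ)]
  refine ⟨Measure.sum fun i => A (i + 1) - A i, ⟨?_⟩, fun k => ?_⟩
  · rw [Measure.sum_apply _ MeasurableSet.univ]
    refine tendsto_nhds_unique (ENNReal.tendsto_nat_tsum _) ?_
    simpa only [hsum] using hlim
  · refine Measure.le_iff.2 fun s hs => ?_
    rw [Measure.sum_apply _ hs, ← hsum k s]
    exact ENNReal.sum_le_tsum _

end MonotoneMeasures

section Composition

variable {α β δ : Type*} [MeasurableSpace α] [MeasurableSpace β] [MeasurableSpace δ]

/-- If `κ x` dominates `c • m` and `η` dominates `ν` uniformly, then `(η ∘ₖ κ) x` dominates the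
mixture of `η ∘ₘ m` and `ν` with weights `c` and `1 - c`. -/
lemma smul_bind_add_smul_le_comp {κ : Kernel α β} [IsMarkovKernel κ] {η : Kernel β δ}
    {m : Measure β} [IsProbabilityMeasure m] {ν : Measure δ} {c : ENNReal}
    {x : α} (hκ : c • m ≤ κ x) (hη : ∀ y, ν ≤ η y) :
    c • m.bind η + (1 - c) • ν ≤ (η ∘ₖ κ) x := by
  have hfin : IsFiniteMeasure (c • m) := isFiniteMeasure_of_le _ hκ
  refine Measure.le_iff.2 fun s hs => ?_
  rw [Kernel.comp_apply' _ _ _ hs, ← Measure.sub_add_cancel_of_le hκ, lintegral_add_measure,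
    add_comm, Measure.add_apply, Measure.smul_apply, Measure.smul_apply, lintegral_smul_measure,
    Measure.bind_apply hs η.aemeasurable]
  gcongr
  calc (1 - c) • ν s = ∫⁻ _, ν s ∂(κ x - c • m) := by
        rw [lintegral_const, Measure.sub_apply MeasurableSet.univ hκ]
        simp [mul_comm]
    _ ≤ ∫⁻ y, η y s ∂(κ x - c • m) := lintegral_mono fun y => hη y s

/-- A uniform lower bound for a kernel persists under precomposition with a Markov kernel. -/
lemma le_comp_of_forall_le {κ : Kernel α β} [IsMarkovKernel κ] {η : Kernel β δ}
    {ν : Measure δ} (hη : ∀ y, ν ≤ η y) (x : α) : ν ≤ (η ∘ₖ κ) x := by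
  simpa using smul_bind_add_smul_le_comp (c := 0) (m := κ x) (κ := κ)
    (by rw [zero_smul]; exact Measure.zero_le _) hη

end Composition

section Chain

variable {𝒳 : ℤ → Type*} [∀ i, MeasurableSpace (𝒳 i)] (P : ∀ i : ℤ, Kernel (𝒳 i) (𝒳 (i + 1)))

lemma isMarkovKernel_nstep (hP : ∀ i, IsMarkovKernel (P i)) (n : ℕ) :
    ∀ (i j : ℤ) (h : i + (n : ℤ) = j), IsMarkovKernel (nstep P n i j h) := by
  induction n with
  | zero => intro i j h; rw [nstep]; infer_instance
  | succ n ih =>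
    intro i j h
    rw [nstep]
    have := ih (i + 1) j (by rw [← h]; push_cast; ring)
    infer_instance

/-- The Chapman-Kolmogorov equation. -/
lemma nstep_add (a b : ℕ) : ∀ (n : ℕ) (i j k : ℤ) (_ : n = a + b) (h : i + (n : ℤ) = k)
    (ha : i + (a : ℤ) = j) (hb : j + (b : ℤ) = k),
    nstep P n i k h = nstep P b j k hb ∘ₖ nstep P a i j ha := by
  induction a with
  | zero =>
    intro n i j k hn h ha hb
    obtain rfl : n = b := by omega
    obtain rfl : i = j := by simpa using ha
    exact (Kernel.comp_id _).symm
  | succ a ih =>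
    intro n i j k hn h ha hb
    obtain rfl : n = a + b + 1 := by omega
    rw [nstep, nstep, ← Kernel.comp_assoc,
      ih (a + b) (i + 1) j k rfl (by rw [← h]; push_cast; ring) (by rw [← ha]; push_cast; ring) hb]

lemma blockTime_strictMono {ℓ : ℤ → ℕ} (hℓ : ∀ j, 1 ≤ ℓ j) (j : ℤ) :
    StrictMono (blockTime ℓ j) :=
  strictMono_nat_of_lt_succ fun k => by
    have := hℓ (j - 1 - (blockTime ℓ j k : ℤ))
    rw [blockTime]
    omega

/-- The common lower bound, obtained from the first `k` minorization blocks before time `j - 1`,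
of all transition probabilities into time `j` that start before these blocks. -/
noncomputable def minorant (ℓ : ℤ → ℕ) (γ : ℤ → ℝ) (m : ∀ j : ℤ, Measure (𝒳 j)) (j : ℤ) :
    ℕ → Measure (𝒳 j)
  | 0 => 0
  | k + 1 =>
      ENNReal.ofReal (γ (j - 1 - (blockTime ℓ j (k + 1) : ℤ))) •
          (m (j - 1 - (blockTime ℓ j k : ℤ))).bind
            (nstep P (blockTime ℓ j k + 1) (j - 1 - (blockTime ℓ j k : ℤ)) j
              (by push_cast; ring)) +
        (1 - ENNReal.ofReal (γ (j - 1 - (blockTime ℓ j (k + 1) : ℤ)))) • minorant ℓ γ m j k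

variable {P} {ℓ : ℤ → ℕ} {γ : ℤ → ℝ} {m : ∀ j : ℤ, Measure (𝒳 j)}

lemma gamma_blockTime_mem_Ioo (hγ : ∀ j, γ (j - (ℓ j : ℤ)) ∈ Set.Ioo (0 : ℝ) 1) (j : ℤ) (k : ℕ) :
    γ (j - 1 - (blockTime ℓ j (k + 1) : ℤ)) ∈ Set.Ioo (0 : ℝ) 1 := by
  have h := hγ (j - 1 - (blockTime ℓ j k : ℤ))
  rwa [sub_sub (j - 1), ← Nat.cast_add] at h

lemma smul_le_nstep (hP : ∀ i, IsMarkovKernel (P i)) (hm : ∀ j, IsProbabilityMeasure (m j))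
    (hγ : ∀ j, γ (j - (ℓ j : ℤ)) ∈ Set.Ioo (0 : ℝ) 1)
    (hminor : ∀ (j : ℤ) (x : 𝒳 (j - (ℓ j : ℤ))) (Γ : Set (𝒳 j)), MeasurableSet Γ →
      γ (j - (ℓ j : ℤ)) * (m j).real Γ ≤ (nstepTo P (ℓ j) j x).real Γ)
    (i j : ℤ) (h : i + (ℓ j : ℤ) = j) (x : 𝒳 i) :
    ENNReal.ofReal (γ i) • m j ≤ nstep P (ℓ j) i j h x := by
  obtain rfl : i = j - (ℓ j : ℤ) := by omega
  have := isMarkovKernel_nstep P hP (ℓ j) _ j h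
  refine Measure.le_iff.2 fun s hs => ?_
  rw [Measure.smul_apply, smul_eq_mul, ← ofReal_measureReal, ← ofReal_measureReal,
    ← ENNReal.ofReal_mul (hγ j).1.le]
  exact ENNReal.ofReal_le_ofReal (hminor j x s hs)

lemma minorant_le_nstep (hP : ∀ i, IsMarkovKernel (P i)) (hm : ∀ j, IsProbabilityMeasure (m j))
    (hγ : ∀ j, γ (j - (ℓ j : ℤ)) ∈ Set.Ioo (0 : ℝ) 1)
    (hminor : ∀ (j : ℤ) (x : 𝒳 (j - (ℓ j : ℤ))) (Γ : Set (𝒳 j)), MeasurableSet Γ →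
      γ (j - (ℓ j : ℤ)) * (m j).real Γ ≤ (nstepTo P (ℓ j) j x).real Γ)
    (j : ℤ) (k : ℕ) : ∀ (n : ℕ) (_ : blockTime ℓ j k < n) (i : ℤ) (h : i + (n : ℤ) = j) (x : 𝒳 i),
      minorant P ℓ γ m j k ≤ nstep P n i j h x := by
  induction k with
  | zero => intro n _ i h x; exact Measure.zero_le _
  | succ k ih =>
    have key : ∀ x, minorant P ℓ γ m j (k + 1) ≤
        nstep P (blockTime ℓ j (k + 1) + 1) (j - 1 - (blockTime ℓ j (k + 1) : ℤ)) j
          (by push_cast; ring) x := by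
      intro x
      have hblock : j - 1 - (blockTime ℓ j (k + 1) : ℤ) + (ℓ (j - 1 - (blockTime ℓ j k : ℤ)) : ℤ)
          = j - 1 - (blockTime ℓ j k : ℤ) := by
        rw [blockTime]; push_cast; ring
      have := isMarkovKernel_nstep P hP _ _ _ hblock
      rw [nstep_add P (ℓ (j - 1 - (blockTime ℓ j k : ℤ))) (blockTime ℓ j k + 1) _ _
        (j - 1 - (blockTime ℓ j k : ℤ)) _ (by rw [blockTime]; ring) _ hblock
        (by push_cast; ring), minorant]
      exact smul_bind_add_smul_le_comp
        (smul_le_nstep hP hm hγ hminor _ _ hblock x) (ih _ (Nat.lt_succ_self _) _ _)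
    intro n hn i h x
    have ha : i + ((n - (blockTime ℓ j (k + 1) + 1) : ℕ) : ℤ)
        = j - 1 - (blockTime ℓ j (k + 1) : ℤ) := by omega
    have := isMarkovKernel_nstep P hP _ _ _ ha
    rw [nstep_add P (n - (blockTime ℓ j (k + 1) + 1)) (blockTime ℓ j (k + 1) + 1) n i
      (j - 1 - (blockTime ℓ j (k + 1) : ℤ)) j (by omega) h ha (by push_cast; ring)]
    exact le_comp_of_forall_le key x

lemma minorant_monotone (hP : ∀ i, IsMarkovKernel (P i)) (hm : ∀ j, IsProbabilityMeasure (m j))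
    (hγ : ∀ j, γ (j - (ℓ j : ℤ)) ∈ Set.Ioo (0 : ℝ) 1)
    (hminor : ∀ (j : ℤ) (x : 𝒳 (j - (ℓ j : ℤ))) (Γ : Set (𝒳 j)), MeasurableSet Γ →
      γ (j - (ℓ j : ℤ)) * (m j).real Γ ≤ (nstepTo P (ℓ j) j x).real Γ) (j : ℤ) :
    Monotone (minorant P ℓ γ m j) := by
  refine monotone_nat_of_le_succ fun k => ?_
  have hle := minorant_le_nstep hP hm hγ hminor j k _ (Nat.lt_succ_self _)
    (j - 1 - (blockTime ℓ j k : ℤ)) (by push_cast; ring)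
  have hγ1 : ENNReal.ofReal (γ (j - 1 - (blockTime ℓ j (k + 1) : ℤ))) ≤ 1 :=
    ENNReal.ofReal_le_one.2 (gamma_blockTime_mem_Ioo hγ j k).2.le
  refine Measure.le_iff.2 fun s hs => ?_
  rw [minorant, Measure.add_apply, Measure.smul_apply, Measure.smul_apply,
    Measure.bind_apply hs (Kernel.aemeasurable _), smul_eq_mul, smul_eq_mul]
  calc minorant P ℓ γ m j k s
      = ENNReal.ofReal (γ (j - 1 - (blockTime ℓ j (k + 1) : ℤ))) *
            ∫⁻ _, minorant P ℓ γ m j k s ∂m (j - 1 - (blockTime ℓ j k : ℤ)) +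
          (1 - ENNReal.ofReal (γ (j - 1 - (blockTime ℓ j (k + 1) : ℤ)))) *
            minorant P ℓ γ m j k s := by
        rw [lintegral_const, measure_univ, mul_one, ← add_mul, add_tsub_cancel_of_le hγ1, one_mul]
    _ ≤ _ := by
        gcongr with y
        exact hle y

lemma minorant_univ (hP : ∀ i, IsMarkovKernel (P i)) (hm : ∀ j, IsProbabilityMeasure (m j))
    (hγ : ∀ j, γ (j - (ℓ j : ℤ)) ∈ Set.Ioo (0 : ℝ) 1) (j : ℤ) (k : ℕ) :
    minorant P ℓ γ m j k Set.univ = ENNReal.ofReal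
      (1 - ∏ i ∈ Finset.Icc 1 k, (1 - γ (j - 1 - (blockTime ℓ j i : ℤ)))) := by
  induction k with
  | zero => simp [minorant]
  | succ k ih =>
    have hg := gamma_blockTime_mem_Ioo hγ j k
    have := isMarkovKernel_nstep P hP (blockTime ℓ j k + 1) (j - 1 - (blockTime ℓ j k : ℤ)) j
      (by push_cast; ring)
    have hp : ∏ i ∈ Finset.Icc 1 k, (1 - γ (j - 1 - (blockTime ℓ j i : ℤ))) ≤ 1 := by
      refine Finset.prod_le_one (fun i hi => ?_) (fun i hi => ?_) <;>
      · obtain ⟨i, rfl⟩ := Nat.exists_eq_add_of_le' (Finset.mem_Icc.1 hi).1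
        have := gamma_blockTime_mem_Ioo hγ j i
        linarith [this.1, this.2]
    rw [minorant, Measure.add_apply, Measure.smul_apply, Measure.smul_apply, ih, smul_eq_mul,
      smul_eq_mul, Measure.bind_apply MeasurableSet.univ (Kernel.aemeasurable _),
      Finset.prod_Icc_succ_top (by omega)]
    simp only [measure_univ, lintegral_const, mul_one]
    rw [← ENNReal.ofReal_one, ← ENNReal.ofReal_sub _ hg.1.le,
      ← ENNReal.ofReal_mul (sub_nonneg.2 hg.2.le), ← ENNReal.ofReal_add hg.1.le
        (mul_nonneg (sub_nonneg.2 hg.2.le) (sub_nonneg.2 hp))]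
    congr 1
    ring

end Chain

/-- Mixing under a general sequential minorization condition. -/
theorem sequential_minorization_mixing
    {𝒳 : ℤ → Type*} [∀ i, MeasurableSpace (𝒳 i)]
    (P : ∀ i : ℤ, Kernel (𝒳 i) (𝒳 (i + 1))) (hP : ∀ i, IsMarkovKernel (P i))
    (ℓ : ℤ → ℕ) (hℓ : ∀ j, 1 ≤ ℓ j)
    (γ : ℤ → ℝ) (hγ : ∀ j, γ (j - (ℓ j : ℤ)) ∈ Set.Ioo (0 : ℝ) 1)
    (m : ∀ j : ℤ, Measure (𝒳 j)) (hm : ∀ j, IsProbabilityMeasure (m j))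
    (hminor : ∀ (j : ℤ) (x : 𝒳 (j - (ℓ j : ℤ))) (Γ : Set (𝒳 j)), MeasurableSet Γ →
      γ (j - (ℓ j : ℤ)) * (m j).real Γ ≤ (nstepTo P (ℓ j) j x).real Γ) :
    (∃ A : ∀ j : ℤ, ℕ → Measure (𝒳 j),
      (∀ j n, IsFiniteMeasure (A j n)) ∧
      (∀ j, Monotone (A j)) ∧
      ∀ (j : ℤ) (M : ℕ), 1 ≤ M → ∀ n : ℕ, blockTime ℓ j (M - 1) < n →
        ∀ (Γ : Set (𝒳 j)), MeasurableSet Γ → ∀ x : 𝒳 (j - (n : ℤ)),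
          |(nstepTo P n j x).real Γ - (A j n).real Γ|
            ≤ ∏ k ∈ Finset.Icc 1 (M - 1), (1 - γ (j - 1 - (blockTime ℓ j k : ℤ)))) ∧
    (∀ j : ℤ,
      Tendsto (fun M : ℕ => ∏ k ∈ Finset.Icc 1 (M - 1),
        (1 - γ (j - 1 - (blockTime ℓ j k : ℤ)))) atTop (nhds 0) →
      ∃ μ : Measure (𝒳 j), IsProbabilityMeasure μ ∧
        ∀ M : ℕ, 1 ≤ M → ∀ n : ℕ, blockTime ℓ j (M - 1) < n →
          ∀ (Γ : Set (𝒳 j)), MeasurableSet Γ → ∀ x : 𝒳 (j - (n : ℤ)),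
            |(nstepTo P n j x).real Γ - μ.real Γ|
              ≤ ∏ k ∈ Finset.Icc 1 (M - 1), (1 - γ (j - 1 - (blockTime ℓ j k : ℤ)))) := by
  have hfin : ∀ j k, IsFiniteMeasure (minorant P ℓ γ m j k) := fun j k =>
    ⟨by rw [minorant_univ hP hm hγ]; exact ENNReal.ofReal_lt_top⟩
  have hmono := minorant_monotone hP hm hγ hminor
  have hreal : ∀ j k, 1 - (minorant P ℓ γ m j k).real Set.univ ≤
      ∏ i ∈ Finset.Icc 1 k, (1 - γ (j - 1 - (blockTime ℓ j i : ℤ))) := fun j k => by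
    rw [measureReal_def, minorant_univ hP hm hγ]
    exact sub_le_comm.1 (Real.le_coe_toNNReal _)
  refine ⟨⟨fun j n => minorant P ℓ γ m j (Nat.findGreatest (fun k => blockTime ℓ j k < n) n),
    fun j n => hfin _ _, fun j a b hab => hmono j ?_, ?_⟩, ?_⟩
  · exact Nat.findGreatest_mono (fun k hk => lt_of_lt_of_le hk hab) hab
  · intro j M hM n hn Γ hΓ x
    have hMn : M - 1 ≤ Nat.findGreatest (fun k => blockTime ℓ j k < n) n :=
      Nat.le_findGreatest (((blockTime_strictMono hℓ j).id_le _).trans hn.le) hn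
    have hK : blockTime ℓ j (Nat.findGreatest (fun k => blockTime ℓ j k < n) n) < n :=
      Nat.findGreatest_spec (P := fun k => blockTime ℓ j k < n)
        (((blockTime_strictMono hℓ j).id_le _).trans hn.le) hn
    have := isMarkovKernel_nstep P hP n (j - n) j (sub_add_cancel _ _)
    have hb := real_sub_mem_Icc_of_le
      (minorant_le_nstep hP hm hγ hminor j _ n hK (j - n) (sub_add_cancel _ _) x) hΓ
    have hle : (minorant P ℓ γ m j (M - 1)).real Set.univ ≤ (minorant P ℓ γ m j
        (Nat.findGreatest (fun k => blockTime ℓ j k < n) n)).real Set.univ :=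
      ENNReal.toReal_mono (measure_ne_top _ _) (hmono j hMn _)
    rw [nstepTo, abs_of_nonneg hb.1]
    linarith [hb.2, hreal j (M - 1)]
  · intro j hlim
    obtain ⟨μ, hμ, hle⟩ := exists_isProbabilityMeasure_ge_of_monotone (hmono j) rfl (by
      have h := ENNReal.tendsto_ofReal
        ((tendsto_const_nhds (x := (1 : ℝ))).sub (hlim.comp (tendsto_add_atTop_nat 1)))
      simpa [minorant_univ hP hm hγ] using h)
    refine ⟨μ, hμ, fun M hM n hn Γ hΓ x => ?_⟩
    have := isMarkovKernel_nstep P hP n (j - n) j (sub_add_cancel _ _)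
    have h1 := real_sub_mem_Icc_of_le
      (minorant_le_nstep hP hm hγ hminor j (M - 1) n hn (j - n) (sub_add_cancel _ _) x) hΓ
    have h2 := real_sub_mem_Icc_of_le (hle (M - 1)) hΓ
    have h3 := hreal j (M - 1)
    rw [nstepTo, abs_le]
    constructor <;> linarith [h1.1, h1.2, h2.1, h2.2]
end

section
/- Let $(X_j)_{j\ge 0}$ be a (possibly time-inhomogeneous) Markov chain, $X_j$ taking values in a measurable space $\mathcal X_j$, which satisfies the uniform Doeblin minorization condition: there are $n_0\in\mathbb N$, $n_0\ge 1$, $\gamma\in(0,1)$ and probability measures $m_j$ on $\mathcal X_j$ such that the $n_0$-step transition probabilities satisfy $P_{j,n_0}(x,\Gamma)=\mathbb P(X_{j+n_0}\in\Gamma\mid X_j=x)\ge \gamma\, m_{j+n_0}(\Gamma)$ for all $j\ge 0$, all $x\in\mathcal X_j$ and all measurable $\Gamma\subseteq\mathcal X_{j+n_0}$. Let $f_j:\mathcal X_j\to\mathbb R$ be measurable functions with $\sup_j\|f_j(X_j)\|_{L^\infty}<\infty$, and put $S_n=\sum_{j=0}^{n-1}f_j(X_j)$ and $\sigma_n=\sqrt{\mathrm{Var}(S_n)}$.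 Suppose that $\sigma_n\to\infty$. Then there are $\delta_0>0$ and, for every $n$, a smooth branch $\Lambda_n:(-\delta_0,\delta_0)\to\mathbb C$ of $\ln\mathbb E\big[e^{it(S_n-\mathbb E[S_n])}\big]$ with $\Lambda_n(0)=0$, such that for every $k\ge 3$ there are constants $\delta_k\in(0,\delta_0)$ and $C_k>0$ with $$\sup_{t\in[-\delta_k,\delta_k]}\big|\Lambda_n^{(s)}(t)\big|\le C_k\,\sigma_n^2\qquad\text{for all } n \text{ and all } 0\le s\le k .$$ -/
open MeasureTheory ProbabilityTheory Filter

noncomputable section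

/-- The σ-algebra generated by `X 0, …, X j`. -/
abbrev pastSigma {Ω : Type*} {𝒳 : ℕ → Type*} [∀ j, MeasurableSpace (𝒳 j)]
    (X : ∀ j, Ω → 𝒳 j) (j : ℕ) : MeasurableSpace Ω :=
  ⨆ i ∈ Set.Iic j, MeasurableSpace.comap (X i) inferInstance

/-- The `n`-step transition probabilities from time `j` obtained by composing the one-step
transition probabilities `P j, P (j + 1), …, P (j + n - 1)`. -/
def stepKernel {𝒳 : ℕ → Type*} [∀ j, MeasurableSpace (𝒳 j)]
    (P : ∀ j, Kernel (𝒳 j) (𝒳 (j + 1))) (j : ℕ) : ∀ n : ℕ, Kernel (𝒳 j) (𝒳 (j + n))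
  | 0 => Kernel.id
  | n + 1 => P (j + n) ∘ₖ stepKernel P j n

/-- `X` is a (time-inhomogeneous) Markov chain on `(Ω, μ)` with one-step transition
probabilities `P j`: almost surely
`ℙ(X (j + 1) ∈ Γ | X 0, …, X j) = P j (X j) Γ` for every `j` and every measurable `Γ`. -/
structure IsMarkovChain {Ω : Type*} [MeasurableSpace Ω] {𝒳 : ℕ → Type*}
    [∀ j, MeasurableSpace (𝒳 j)] (μ : Measure Ω) (X : ∀ j, Ω → 𝒳 j)
    (P : ∀ j, Kernel (𝒳 j) (𝒳 (j + 1))) : Prop where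
  measurable : ∀ j, Measurable (X j)
  isMarkovKernel : ∀ j, IsMarkovKernel (P j)
  condProb : ∀ j (Γ : Set (𝒳 (j + 1))), MeasurableSet Γ →
    μ⟦X (j + 1) ⁻¹' Γ | pastSigma X j⟧ =ᵐ[μ] fun ω => (P j (X j ω)).real Γ

/-- The uniform Doeblin minorization condition after `n₀` steps, with constant `γ` and
minorizing measures `m j`. -/
def DoeblinMinorization {𝒳 : ℕ → Type*} [∀ j, MeasurableSpace (𝒳 j)]
    (P : ∀ j, Kernel (𝒳 j) (𝒳 (j + 1))) (n₀ : ℕ) (γ : ℝ) (m : ∀ j, Measure (𝒳 j)) : Prop :=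
  ∀ j (x : 𝒳 j) (Γ : Set (𝒳 (j + n₀))), MeasurableSet Γ →
    γ * (m (j + n₀)).real Γ ≤ (stepKernel P j n₀ x).real Γ

/-- The partial sum `S_n = f_0(X_0) + ⋯ + f_{n-1}(X_{n-1})`. -/
def partialSum {Ω : Type*} {𝒳 : ℕ → Type*} (X : ∀ j, Ω → 𝒳 j) (f : ∀ j, 𝒳 j → ℝ)
    (n : ℕ) (ω : Ω) : ℝ :=
  ∑ j ∈ Finset.range n, f j (X j ω)

/-- The characteristic function `t ↦ E[exp (i t (Z - E[Z]))]` of the centering of `Z`. -/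
def centeredCharFun {Ω : Type*} [MeasurableSpace Ω] (μ : Measure Ω) (Z : Ω → ℝ) (t : ℝ) : ℂ :=
  ∫ ω, Complex.exp (Complex.I * (t : ℂ) * ((Z ω - ∫ ω', Z ω' ∂μ : ℝ) : ℂ)) ∂μ

end

/-- Bounded strongly measurable functions. -/
structure BddMeas {α E : Type*} [MeasurableSpace α] [NormedAddCommGroup E] (u : α → E) : Prop where
  stronglyMeasurable : StronglyMeasurable u
  bdd : ∃ C, ∀ x, ‖u x‖ ≤ C

namespace BddMeas

variable {α β E : Type*} {mα : MeasurableSpace α} {mβ : MeasurableSpace β} [NormedAddCommGroup E]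

lemma const (c : E) : BddMeas (fun _ : α => c) :=
  ⟨stronglyMeasurable_const, ‖c‖, fun _ => le_rfl⟩

lemma add {u v : α → E} (hu : BddMeas u) (hv : BddMeas v) : BddMeas (fun x => u x + v x) := by
  obtain ⟨hu, C, hC⟩ := hu
  obtain ⟨hv, C', hC'⟩ := hv
  exact ⟨hu.add hv, C + C', fun x => (norm_add_le _ _).trans (add_le_add (hC x) (hC' x))⟩

lemma neg {u : α → E} (hu : BddMeas u) : BddMeas (fun x => - u x) := by
  obtain ⟨hu, C, hC⟩ := hu
  exact ⟨hu.neg, C, fun x => (norm_neg _).trans_le (hC x)⟩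

lemma sub {u v : α → E} (hu : BddMeas u) (hv : BddMeas v) : BddMeas (fun x => u x - v x) := by
  simpa only [sub_eq_add_neg] using hu.add hv.neg

lemma mul {R : Type*} [NormedRing R] {u v : α → R} (hu : BddMeas u) (hv : BddMeas v) :
    BddMeas (fun x => u x * v x) := by
  obtain ⟨hu, C, hC⟩ := hu
  obtain ⟨hv, C', hC'⟩ := hv
  exact ⟨hu.mul hv, C * C', fun x => (norm_mul_le _ _).trans
    (mul_le_mul (hC x) (hC' x) (norm_nonneg _) ((norm_nonneg _).trans (hC x)))⟩

lemma sum {ι : Type*} (s : Finset ι) {u : ι → α → E} (hu : ∀ i ∈ s, BddMeas (u i)) :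
    BddMeas (fun x => ∑ i ∈ s, u i x) := by
  classical
  induction s using Finset.induction_on with
  | empty => simpa using const (0 : E)
  | insert a s ha ih =>
    simp only [Finset.sum_insert ha]
    exact (hu a (Finset.mem_insert_self a s)).add
      (ih fun i hi => hu i (Finset.mem_insert_of_mem hi))

lemma comp {u : β → E} (hu : BddMeas u) {g : α → β} (hg : Measurable g) :
    BddMeas (fun x => u (g x)) := by
  obtain ⟨hu, C, hC⟩ := hu
  exact ⟨hu.comp_measurable hg, C, fun x => hC _⟩

lemma mono {m m' : MeasurableSpace α} (h : m ≤ m') {u : α → E} (hu : @BddMeas α E m _ u) :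
    @BddMeas α E m' _ u :=
  @BddMeas.mk α E m' _ u ((@BddMeas.stronglyMeasurable α E m _ u hu).mono h)
    (@BddMeas.bdd α E m _ u hu)

lemma norm_sq {u : α → E} (hu : BddMeas u) : BddMeas (fun x => ‖u x‖ ^ 2) := by
  obtain ⟨hu, C, hC⟩ := hu
  refine ⟨hu.norm.pow 2, C ^ 2, fun x => ?_⟩
  rw [norm_pow, norm_norm]
  exact pow_le_pow_left₀ (norm_nonneg _) (hC x) 2

lemma ofReal {u : α → ℝ} (hu : BddMeas u) : BddMeas (fun x => (u x : ℂ)) := by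
  obtain ⟨hu, C, hC⟩ := hu
  exact ⟨Complex.continuous_ofReal.comp_stronglyMeasurable hu, C, fun x => by simpa using hC x⟩

lemma cexp {u : α → ℂ} (hu : BddMeas u) : BddMeas (fun x => Complex.exp (u x)) := by
  obtain ⟨hu, C, hC⟩ := hu
  refine ⟨Complex.continuous_exp.comp_stronglyMeasurable hu, Real.exp C, fun x => ?_⟩
  rw [Complex.norm_exp]
  exact Real.exp_le_exp.2 (((le_abs_self _).trans (Complex.abs_re_le_norm _)).trans (hC x))

lemma integrable {u : α → E} (hu : BddMeas u) (μ : Measure α) [IsFiniteMeasure μ] :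
    Integrable u μ := by
  obtain ⟨hu, C, hC⟩ := hu
  exact Integrable.of_bound hu.aestronglyMeasurable C (ae_of_all _ hC)

lemma memLp {u : α → E} (hu : BddMeas u) (μ : Measure α) [IsFiniteMeasure μ] (p : ENNReal) :
    MemLp u p μ := by
  obtain ⟨hu, C, hC⟩ := hu
  exact MemLp.of_bound hu.aestronglyMeasurable C (ae_of_all _ hC)

lemma kernel_prod [NormedSpace ℝ E] {u : α × β → E} (hu : BddMeas u) (κ : Kernel α β)
    [IsMarkovKernel κ] : BddMeas (fun x => ∫ y, u (x, y) ∂κ x) := by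
  obtain ⟨hu, C, hC⟩ := hu
  refine ⟨hu.integral_kernel_prod_right', C, fun x => ?_⟩
  simpa using norm_integral_le_of_norm_le_const (μ := κ x) (ae_of_all _ fun y => hC (x, y))

lemma kernel [NormedSpace ℝ E] {u : β → E} (hu : BddMeas u) (κ : Kernel α β)
    [IsMarkovKernel κ] : BddMeas (fun x => ∫ y, u y ∂κ x) :=
  kernel_prod (hu.comp measurable_snd) κ

end BddMeas

section Measures

variable {α E : Type*} {mα : MeasurableSpace α} [NormedAddCommGroup E] [NormedSpace ℝ E]

/-- Cauchy-Schwarz against the constant function. -/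
lemma norm_integral_sq_le {ν : Measure α} [IsFiniteMeasure ν] {c : ℝ} (hc : 0 < c)
    (hν : ν.real Set.univ = c) {u : α → E} (hu : BddMeas u) :
    ‖∫ x, u x ∂ν‖ ^ 2 ≤ c * ∫ x, ‖u x‖ ^ 2 ∂ν := by
  have h1 : ‖∫ x, u x ∂ν‖ ≤ ∫ x, ‖u x‖ ∂ν := norm_integral_le_integral_norm _
  set B := ∫ x, ‖u x‖ ∂ν with hB
  have hi1 : Integrable (fun x => ‖u x‖) ν := (hu.integrable ν).norm
  have hi2 : Integrable (fun x => ‖u x‖ ^ 2) ν := hu.norm_sq.integrable ν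
  have h2 : 0 ≤ ∫ x, (‖u x‖ - B / c) ^ 2 ∂ν := integral_nonneg fun x => sq_nonneg _
  have h3 : ∫ x, (‖u x‖ - B / c) ^ 2 ∂ν
      = (∫ x, ‖u x‖ ^ 2 ∂ν) - 2 * (B / c) * B + (B / c) ^ 2 * c := by
    have : ∀ x, (‖u x‖ - B / c) ^ 2 = ‖u x‖ ^ 2 - 2 * (B / c) * ‖u x‖ + (B / c) ^ 2 :=
      fun x => by ring
    simp_rw [this]
    rw [integral_add (by exact hi2.sub (hi1.const_mul _)) (integrable_const _),
      integral_sub hi2 (hi1.const_mul _), integral_const_mul, integral_const, hν]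
    simp only [smul_eq_mul]
    ring
  have h4 : B ^ 2 ≤ c * ∫ x, ‖u x‖ ^ 2 ∂ν := by
    rw [h3] at h2
    have : (∫ x, ‖u x‖ ^ 2 ∂ν) - 2 * (B / c) * B + (B / c) ^ 2 * c
        = (∫ x, ‖u x‖ ^ 2 ∂ν) - B ^ 2 / c := by
      field_simp
      ring
    rw [this, sub_nonneg, div_le_iff₀ hc] at h2
    linarith
  exact (pow_le_pow_left₀ (norm_nonneg _) h1 2).trans h4

lemma norm_integral_sq_le_of_isProbabilityMeasure {ν : Measure α} [IsProbabilityMeasure ν]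
    {u : α → E} (hu : BddMeas u) : ‖∫ x, u x ∂ν‖ ^ 2 ≤ ∫ x, ‖u x‖ ^ 2 ∂ν := by
  simpa using norm_integral_sq_le (ν := ν) one_pos (by simp) hu

/-- A probability measure minorized by `γ m` is `γ m` plus a measure of mass `1 - γ`. -/
lemma exists_add_smul_of_minorization {ν m : Measure α} [IsProbabilityMeasure ν]
    [IsProbabilityMeasure m] {γ : ℝ} (hγ : 0 ≤ γ)
    (h : ∀ Γ, MeasurableSet Γ → γ * m.real Γ ≤ ν.real Γ) :
    ∃ ν' : Measure α, IsFiniteMeasure ν' ∧ ν'.real Set.univ = 1 - γ ∧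
      ν = ν' + ENNReal.ofReal γ • m := by
  have hfin : IsFiniteMeasure (ENNReal.ofReal γ • m) := Measure.smul_finite m ENNReal.ofReal_ne_top
  have hle : ENNReal.ofReal γ • m ≤ ν := by
    refine Measure.le_iff.2 fun s hs => ?_
    have := h s hs
    rw [Measure.smul_apply, smul_eq_mul, ← ENNReal.ofReal_toReal (measure_ne_top m s),
      ← ENNReal.ofReal_mul hγ, ← ENNReal.ofReal_toReal (measure_ne_top ν s)]
    exact ENNReal.ofReal_le_ofReal this
  have heq := Measure.sub_add_cancel_of_le hle
  have hfin' : IsFiniteMeasure (ν - ENNReal.ofReal γ • m) := inferInstance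
  refine ⟨ν - ENNReal.ofReal γ • m, hfin', ?_, heq.symm⟩
  have h1 : ν.real Set.univ = 1 := by simp
  rw [← heq, measureReal_add_apply, measureReal_ennreal_smul_apply] at h1
  simp [ENNReal.toReal_ofReal hγ] at h1
  linarith

lemma integral_add_ofReal_smul {ν' m : Measure α} [IsFiniteMeasure ν'] [IsFiniteMeasure m] {γ : ℝ}
    (hγ : 0 ≤ γ) {u : α → E} (hu : BddMeas u) :
    ∫ x, u x ∂(ν' + ENNReal.ofReal γ • m) = (∫ x, u x ∂ν') + γ • ∫ x, u x ∂m := by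
  have hfin : IsFiniteMeasure (ENNReal.ofReal γ • m) := Measure.smul_finite m ENNReal.ofReal_ne_top
  rw [integral_add_measure (hu.integrable _) (hu.integrable _), integral_smul_measure,
    ENNReal.toReal_ofReal hγ]

/-- Contraction of oscillations under minorization. -/
lemma integral_sub_integral_le_of_minorization {ν₁ ν₂ m : Measure α} [IsProbabilityMeasure ν₁]
    [IsProbabilityMeasure ν₂] [IsProbabilityMeasure m] {γ : ℝ} (hγ : 0 ≤ γ) (hγ1 : γ < 1)
    (h₁ : ∀ Γ, MeasurableSet Γ → γ * m.real Γ ≤ ν₁.real Γ)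
    (h₂ : ∀ Γ, MeasurableSet Γ → γ * m.real Γ ≤ ν₂.real Γ)
    {u : α → ℝ} (hu : BddMeas u) {r : ℝ} (hr : ∀ x y, u x - u y ≤ r) :
    (∫ x, u x ∂ν₁) - ∫ x, u x ∂ν₂ ≤ (1 - γ) * r := by
  obtain ⟨a, ha, ha1, rfl⟩ := exists_add_smul_of_minorization hγ h₁
  obtain ⟨b, hb, hb1, rfl⟩ := exists_add_smul_of_minorization hγ h₂
  rw [integral_add_ofReal_smul hγ hu, integral_add_ofReal_smul hγ hu, add_sub_add_right_eq_sub]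
  have hia := hu.integrable a
  have hib := hu.integrable b
  have h1 : ∀ y, ∫ x, u x ∂a ≤ (1 - γ) * (u y + r) := fun y => by
    have := integral_mono hia (integrable_const (u y + r)) (fun x => by linarith [hr x y])
    simpa [ha1] using this
  have h2 := integral_mono (integrable_const (∫ x, u x ∂a))
    (g := fun y => (1 - γ) * (u y + r)) ((hib.add (integrable_const r)).const_mul (1 - γ)) h1
  have h3 : ∫ y, (1 - γ) * (u y + r) ∂b = (1 - γ) * ((∫ x, u x ∂b) + (1 - γ) * r) := by
    rw [integral_const_mul, integral_add hib (integrable_const r)]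
    simp [hb1]
  have h4 : (1 - γ) * ∫ x, u x ∂a ≤ (1 - γ) * ((∫ x, u x ∂b) + (1 - γ) * r) := by
    rw [← h3]
    simpa [hb1] using h2
  have := le_of_mul_le_mul_left h4 (by linarith)
  linarith

/-- Contraction of second moments under minorization. -/
lemma norm_integral_sub_sq_le_of_minorization {ν m : Measure α} [IsProbabilityMeasure ν]
    [IsProbabilityMeasure m] {γ : ℝ} (hγ : 0 ≤ γ) (hγ1 : γ < 1)
    (h : ∀ Γ, MeasurableSet Γ → γ * m.real Γ ≤ ν.real Γ) {u : α → E} (hu : BddMeas u) :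
    ‖(∫ x, u x ∂ν) - γ • ∫ x, u x ∂m‖ ^ 2 ≤ (1 - γ) * ∫ x, ‖u x‖ ^ 2 ∂ν := by
  obtain ⟨a, ha, ha1, rfl⟩ := exists_add_smul_of_minorization hγ h
  rw [integral_add_ofReal_smul hγ hu, integral_add_ofReal_smul hγ hu.norm_sq, add_sub_cancel_right]
  refine (norm_integral_sq_le (by linarith) ha1 hu).trans ?_
  refine mul_le_mul_of_nonneg_left (le_add_of_nonneg_right ?_) (by linarith)
  exact mul_nonneg hγ (integral_nonneg fun x => sq_nonneg _)

end Measures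

section L2

variable {Ω E : Type*} {mΩ : MeasurableSpace Ω} [NormedAddCommGroup E] {μ : Measure Ω}

lemma lpNorm_two_sq {U : Ω → E} (hU : AEStronglyMeasurable U μ) :
    lpNorm U 2 μ ^ 2 = ∫ ω, ‖U ω‖ ^ 2 ∂μ := by
  rw [lpNorm_eq_integral_norm_rpow_toReal (by simp) (by simp) hU]
  simp only [ENNReal.toReal_ofNat, Real.rpow_ofNat]
  rw [← Real.rpow_natCast, ← Real.rpow_mul (integral_nonneg fun x => sq_nonneg _)]
  simp

lemma lpNorm_two_le_of_integral_le {F : Type*} [NormedAddCommGroup F] {U : Ω → E} {V : Ω → F}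
    (hU : AEStronglyMeasurable U μ) (hV : AEStronglyMeasurable V μ)
    (h : ∫ ω, ‖U ω‖ ^ 2 ∂μ ≤ ∫ ω, ‖V ω‖ ^ 2 ∂μ) : lpNorm U 2 μ ≤ lpNorm V 2 μ := by
  rw [← lpNorm_two_sq hU, ← lpNorm_two_sq hV] at h
  exact (pow_le_pow_iff_left₀ lpNorm_nonneg lpNorm_nonneg two_ne_zero).1 h

lemma norm_integral_le_lpNorm_two [NormedSpace ℝ E] [IsProbabilityMeasure μ] {U : Ω → E}
    (hU : BddMeas U) : ‖∫ ω, U ω ∂μ‖ ≤ lpNorm U 2 μ := by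
  have := norm_integral_sq_le_of_isProbabilityMeasure (ν := μ) hU
  rw [← lpNorm_two_sq hU.1.aestronglyMeasurable] at this
  exact (pow_le_pow_iff_left₀ (norm_nonneg _) lpNorm_nonneg two_ne_zero).1 this

end L2

section Disintegration

variable {Ω α β E : Type*} {mΩ : MeasurableSpace Ω} {mα : MeasurableSpace α}
  {mβ : MeasurableSpace β} {μ : Measure Ω} [IsProbabilityMeasure μ] {Y : Ω → α} {Z : Ω → β}
  {κ : Kernel α β} [IsMarkovKernel κ]

lemma map_prodMk_eq_compProd_of_condProb (hY : Measurable Y) (hZ : Measurable Z)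
    (h : ∀ Γ, MeasurableSet Γ →
      μ⟦Z ⁻¹' Γ | mα.comap Y⟧ =ᵐ[μ] fun ω => (κ (Y ω)).real Γ) :
    μ.map (fun ω => (Y ω, Z ω)) = (μ.map Y) ⊗ₘ κ := by
  have := Measure.isProbabilityMeasure_map (μ := μ) hY.aemeasurable
  have := Measure.isProbabilityMeasure_map (μ := μ) (hY.prodMk hZ).aemeasurable
  refine Measure.ext_prod fun {A Γ} hA hΓ => ?_
  rw [Measure.map_apply (hY.prodMk hZ) (hA.prod hΓ), Measure.compProd_apply_prod hA hΓ,
    setLIntegral_map hA (κ.measurable_coe hΓ) hY]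
  have hA' : MeasurableSet[mα.comap Y] (Y ⁻¹' A) := ⟨A, hA, rfl⟩
  have h1 := setIntegral_condExp hY.comap_le (μ := μ)
    (f := (Z ⁻¹' Γ).indicator fun _ => (1 : ℝ))
    ((integrable_const 1).indicator (hZ hΓ)) hA'
  rw [setIntegral_congr_ae (hY hA) ((h Γ hΓ).mono fun ω hω _ => hω),
    setIntegral_indicator (hZ hΓ)] at h1
  simp only [Measure.real] at h1
  rw [integral_toReal (f := fun ω => κ (Y ω) Γ) ((κ.measurable_coe hΓ).comp hY).aemeasurable
    (ae_of_all _ fun ω => measure_lt_top _ _)] at h1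
  have h2 : ∫⁻ ω in Y ⁻¹' A, κ (Y ω) Γ ∂μ ≠ ⊤ := by
    refine ne_top_of_le_ne_top (measure_ne_top μ (Y ⁻¹' A)) ?_
    calc ∫⁻ ω in Y ⁻¹' A, κ (Y ω) Γ ∂μ ≤ ∫⁻ ω in Y ⁻¹' A, 1 ∂μ :=
          lintegral_mono fun ω => prob_le_one
      _ = μ (Y ⁻¹' A) := by simp
  rw [← ENNReal.ofReal_toReal h2, h1]
  simp [Measure.real, Set.mk_preimage_prod]

lemma integral_eq_integral_kernel_of_condProb [NormedAddCommGroup E] [NormedSpace ℝ E]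
    (hY : Measurable Y) (hZ : Measurable Z)
    (h : ∀ Γ, MeasurableSet Γ →
      μ⟦Z ⁻¹' Γ | mα.comap Y⟧ =ᵐ[μ] fun ω => (κ (Y ω)).real Γ)
    {Φ : α × β → E} (hΦ : BddMeas Φ) :
    ∫ ω, Φ (Y ω, Z ω) ∂μ = ∫ ω, ∫ y, Φ (Y ω, y) ∂κ (Y ω) ∂μ := by
  have := Measure.isProbabilityMeasure_map (μ := μ) hY.aemeasurable
  rw [← integral_map (φ := fun ω => (Y ω, Z ω)) (f := Φ) (hY.prodMk hZ).aemeasurable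
      hΦ.1.aestronglyMeasurable, map_prodMk_eq_compProd_of_condProb hY hZ h,
    Measure.integral_compProd (hΦ.integrable _),
    integral_map hY.aemeasurable (hΦ.kernel_prod κ).1.aestronglyMeasurable]

end Disintegration

section Kernels

variable {𝒳 : ℕ → Type*} [∀ j, MeasurableSpace (𝒳 j)] {P : ∀ j, Kernel (𝒳 j) (𝒳 (j + 1))}
  {E : Type*} [NormedAddCommGroup E] [NormedSpace ℝ E]

lemma isMarkovKernel_stepKernel (hP : ∀ j, IsMarkovKernel (P j)) (j i : ℕ) :
    IsMarkovKernel (stepKernel P j i) := by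
  induction i with
  | zero => rw [stepKernel]; infer_instance
  | succ i ih => rw [stepKernel]; infer_instance

lemma integral_stepKernel_zero [CompleteSpace E] {j : ℕ} {u : 𝒳 j → E} (hu : BddMeas u) (x : 𝒳 j) :
    ∫ y, u y ∂stepKernel P j 0 x = u x := by
  rw [stepKernel, Kernel.id_apply]
  exact integral_dirac' _ _ hu.1

lemma integral_stepKernel_succ (hP : ∀ j, IsMarkovKernel (P j)) {j i : ℕ}
    {u : 𝒳 (j + i + 1) → E} (hu : BddMeas u) (x : 𝒳 j) :
    ∫ y, u y ∂stepKernel P j (i + 1) x = ∫ z, ∫ y, u y ∂P (j + i) z ∂stepKernel P j i x := by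
  have := isMarkovKernel_stepKernel hP j i
  rw [stepKernel]
  exact Kernel.integral_comp (hu.integrable _)

/-- Solution of the backward recursion `u j = p j + P j (u (j + 1))`. -/
lemma eq_sum_integral_stepKernel [CompleteSpace E] (hP : ∀ j, IsMarkovKernel (P j))
    {u p : ∀ j, 𝒳 j → E}
    (hu : ∀ j, BddMeas (u j)) (hp : ∀ j, BddMeas (p j))
    (hrec : ∀ j x, u j x = p j x + ∫ y, u (j + 1) y ∂P j x) (j r : ℕ) (x : 𝒳 j) :
    u j x = ∑ i ∈ Finset.range r, (∫ y, p (j + i) y ∂stepKernel P j i x)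
      + ∫ y, u (j + r) y ∂stepKernel P j r x := by
  induction r with
  | zero =>
    rw [Finset.sum_range_zero, zero_add]
    exact (integral_stepKernel_zero (hu j) x).symm
  | succ r ih =>
    have := isMarkovKernel_stepKernel hP j r
    rw [ih, Finset.sum_range_succ, add_assoc]
    congr 1
    have h1 : ∫ y, u (j + (r + 1)) y ∂stepKernel P j (r + 1) x
        = ∫ z, ∫ y, u (j + r + 1) y ∂P (j + r) z ∂stepKernel P j r x :=
      integral_stepKernel_succ hP (hu (j + r + 1)) x
    rw [h1, ← integral_add ((hp _).integrable _) (((hu (j + r + 1)).kernel _).integrable _)]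
    exact integral_congr_ae (ae_of_all _ fun y => hrec (j + r) y)

lemma sub_le_of_backward_recursion (hP : ∀ j, IsMarkovKernel (P j)) {n₀ : ℕ} (hn₀ : 0 < n₀)
    {γ : ℝ} (hγ : γ ∈ Set.Ioo (0 : ℝ) 1) {m : ∀ j, Measure (𝒳 j)}
    (hm : ∀ j, IsProbabilityMeasure (m j)) (hD : DoeblinMinorization P n₀ γ m)
    {g f : ∀ j, 𝒳 j → ℝ} (hg : ∀ j, BddMeas (g j)) (hf : ∀ j, BddMeas (f j))
    (hrec : ∀ j x, g j x = f j x + ∫ y, g (j + 1) y ∂P j x)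
    {n : ℕ} (hn : ∀ j, n ≤ j → ∀ x, g j x = 0) {K B : ℝ} (hK : ∀ j x, |f j x| ≤ K)
    (hB0 : 0 ≤ B) (hB : 2 * K * n₀ ≤ γ * B) (j : ℕ) (x y : 𝒳 j) : g j x - g j y ≤ B := by
  suffices h : ∀ r j, n ≤ j + r → ∀ x y : 𝒳 j, g j x - g j y ≤ B from h n j (by omega) x y
  intro r
  induction r with
  | zero =>
    intro j hj x y
    simp [hn j (by omega), hB0]
  | succ r ih =>
    intro j hj x y
    have := isMarkovKernel_stepKernel hP j
    have h1 : ∀ i ∈ Finset.range n₀, (∫ z, f (j + i) z ∂stepKernel P j i x)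
        - (∫ z, f (j + i) z ∂stepKernel P j i y) ≤ 2 * K := by
      intro i _
      have h : ∀ x, |∫ z, f (j + i) z ∂stepKernel P j i x| ≤ K := fun x => by
        simpa using norm_integral_le_of_norm_le_const (μ := stepKernel P j i x)
          (f := f (j + i)) (ae_of_all _ (hK (j + i)))
      have hx := abs_le.1 (h x)
      have hy := abs_le.1 (h y)
      linarith
    have h2 := integral_sub_integral_le_of_minorization hγ.1.le hγ.2 (hD j x) (hD j y)
      (hg (j + n₀)) (ih (j + n₀) (by omega))
    have h3 := Finset.sum_le_sum h1
    rw [Finset.sum_sub_distrib, Finset.sum_const, Finset.card_range, nsmul_eq_mul] at h3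
    rw [eq_sum_integral_stepKernel hP hg hf hrec j n₀ x,
      eq_sum_integral_stepKernel hP hg hf hrec j n₀ y]
    linarith

end Kernels

lemma measurable_pastSigma {Ω : Type*} {𝒳 : ℕ → Type*} [∀ j, MeasurableSpace (𝒳 j)]
    (X : ∀ j, Ω → 𝒳 j) {i j : ℕ} (hij : i ≤ j) : Measurable[pastSigma X j] (X i) := by
  refine Measurable.of_comap_le ?_
  exact le_iSup₂ (f := fun i (_ : i ∈ Set.Iic j) => MeasurableSpace.comap (X i) inferInstance)
    i hij

lemma pastSigma_le {Ω : Type*} {𝒳 : ℕ → Type*} {mΩ : MeasurableSpace Ω}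
    [∀ j, MeasurableSpace (𝒳 j)] {X : ∀ j, Ω → 𝒳 j} (hX : ∀ j, Measurable (X j)) (j : ℕ) :
    pastSigma X j ≤ mΩ :=
  iSup₂_le fun i _ => (hX i).comap_le

namespace IsMarkovChain

variable {Ω : Type*} [mΩ : MeasurableSpace Ω] {𝒳 : ℕ → Type*} [∀ j, MeasurableSpace (𝒳 j)]
  {μ : Measure Ω} [IsProbabilityMeasure μ] {X : ∀ j, Ω → 𝒳 j}
  {P : ∀ j, Kernel (𝒳 j) (𝒳 (j + 1))} {E : Type*} [NormedAddCommGroup E] [NormedSpace ℝ E]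

lemma integral_step (hX : IsMarkovChain μ X P) (j : ℕ) {Φ : Ω × 𝒳 (j + 1) → E}
    (hΦ : @BddMeas _ _ (@Prod.instMeasurableSpace _ _ (pastSigma X j) _) _ Φ) :
    ∫ ω, Φ (ω, X (j + 1) ω) ∂μ = ∫ ω, ∫ y, Φ (ω, y) ∂P j (X j ω) ∂μ := by
  have := hX.isMarkovKernel j
  let κ : @Kernel Ω (𝒳 (j + 1)) (pastSigma X j) _ :=
    @Kernel.comap _ _ _ _ _ (pastSigma X j) (P j) (X j) (measurable_pastSigma X le_rfl)
  have hκ : @IsMarkovKernel _ _ (pastSigma X j) _ κ :=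
    @Kernel.IsMarkovKernel.comap _ _ _ _ _ (pastSigma X j) (X j) (P j) _
      (measurable_pastSigma X le_rfl)
  refine @integral_eq_integral_kernel_of_condProb Ω Ω (𝒳 (j + 1)) E mΩ (pastSigma X j) _ μ _ id
    (X (j + 1)) κ hκ _ _ (measurable_id'' (pastSigma_le hX.measurable j)) (hX.measurable _) ?_ Φ hΦ
  intro Γ hΓ
  rw [MeasurableSpace.comap_id]
  exact hX.condProb j Γ hΓ

lemma integral_mul_step {𝕜 : Type*} [RCLike 𝕜] (hX : IsMarkovChain μ X P) (j : ℕ) {φ : Ω → 𝕜}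
    (hφ : @BddMeas _ _ (pastSigma X j) _ φ) {u : 𝒳 (j + 1) → 𝕜} (hu : BddMeas u) :
    ∫ ω, φ ω * u (X (j + 1) ω) ∂μ = ∫ ω, φ ω * ∫ y, u y ∂P j (X j ω) ∂μ := by
  have h1 := @BddMeas.comp _ _ _ (@Prod.instMeasurableSpace _ _ (pastSigma X j) _)
    (pastSigma X j) _ φ hφ (Prod.fst : Ω × 𝒳 (j + 1) → Ω)
    (@measurable_fst _ _ (pastSigma X j) _)
  have h2 := @BddMeas.comp _ _ _ (@Prod.instMeasurableSpace _ _ (pastSigma X j) _)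
    _ _ u hu (Prod.snd : Ω × 𝒳 (j + 1) → 𝒳 (j + 1))
    (@measurable_snd _ _ (pastSigma X j) _)
  have h3 := @BddMeas.mul _ (@Prod.instMeasurableSpace _ _ (pastSigma X j) _) _ _ _ _ h1 h2
  rw [hX.integral_step j h3]
  simp only [integral_const_mul]

lemma integral_prod_step (hX : IsMarkovChain μ X P) (j : ℕ) {Φ : 𝒳 j × 𝒳 (j + 1) → E}
    (hΦ : BddMeas Φ) :
    ∫ ω, Φ (X j ω, X (j + 1) ω) ∂μ = ∫ ω, ∫ y, Φ (X j ω, y) ∂P j (X j ω) ∂μ := by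
  have h1 : @Measurable _ _ (@Prod.instMeasurableSpace _ _ (pastSigma X j) _) _
      (fun p : Ω × 𝒳 (j + 1) => (X j p.1, p.2)) :=
    @Measurable.prodMk (Ω × 𝒳 (j + 1))
      (@Prod.instMeasurableSpace _ _ (pastSigma X j) _) _ _ _ _ (fun p => X j p.1) (fun p => p.2)
      ((measurable_pastSigma X le_rfl).comp (@measurable_fst _ _ (pastSigma X j) _))
      (@measurable_snd _ _ (pastSigma X j) _)
  exact hX.integral_step j (@BddMeas.comp _ _ _ (@Prod.instMeasurableSpace _ _ (pastSigma X j) _)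
    _ _ Φ hΦ _ h1)

lemma integral_kernel (hX : IsMarkovChain μ X P) (j : ℕ) {u : 𝒳 (j + 1) → E} (hu : BddMeas u) :
    ∫ ω, ∫ y, u y ∂P j (X j ω) ∂μ = ∫ ω, u (X (j + 1) ω) ∂μ :=
  (hX.integral_prod_step j (hu.comp measurable_snd)).symm

lemma integral_stepKernel [CompleteSpace E] (hX : IsMarkovChain μ X P) (j i : ℕ)
    {u : 𝒳 (j + i) → E} (hu : BddMeas u) :
    ∫ ω, ∫ y, u y ∂stepKernel P j i (X j ω) ∂μ = ∫ ω, u (X (j + i) ω) ∂μ := by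
  induction i with
  | zero => exact integral_congr_ae (ae_of_all _ fun ω => integral_stepKernel_zero hu (X j ω))
  | succ i ih =>
    have := hX.isMarkovKernel (j + i)
    refine Eq.trans ?_ (hX.integral_kernel (j + i) hu)
    refine Eq.trans ?_ (ih (hu.kernel (P (j + i))))
    exact integral_congr_ae (ae_of_all _ fun ω =>
      integral_stepKernel_succ hX.isMarkovKernel hu (X j ω))

lemma lpNorm_stepKernel_le (hX : IsMarkovChain μ X P) (j i : ℕ) {u : 𝒳 (j + i) → E}
    (hu : BddMeas u) :
    lpNorm (fun ω => ∫ y, u y ∂stepKernel P j i (X j ω)) 2 μ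
      ≤ lpNorm (fun ω => u (X (j + i) ω)) 2 μ := by
  have := isMarkovKernel_stepKernel hX.isMarkovKernel j i
  have hm := hX.measurable
  refine lpNorm_two_le_of_integral_le ((hu.kernel _).comp (hm j)).1.aestronglyMeasurable
    (hu.comp (hm _)).1.aestronglyMeasurable ?_
  rw [← hX.integral_stepKernel j i hu.norm_sq]
  refine integral_mono (((hu.kernel _).comp (hm j)).norm_sq.integrable μ)
    (((hu.norm_sq).kernel _ |>.comp (hm j)).integrable μ) fun ω => ?_
  exact norm_integral_sq_le_of_isProbabilityMeasure hu

lemma lpNorm_kernel_prod_le (hX : IsMarkovChain μ X P) (j : ℕ) {Φ : 𝒳 j × 𝒳 (j + 1) → E}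
    (hΦ : BddMeas Φ) :
    lpNorm (fun ω => ∫ y, Φ (X j ω, y) ∂P j (X j ω)) 2 μ
      ≤ lpNorm (fun ω => Φ (X j ω, X (j + 1) ω)) 2 μ := by
  have := hX.isMarkovKernel j
  have hm := hX.measurable
  refine lpNorm_two_le_of_integral_le ((hΦ.kernel_prod (P j)).comp (hm j)).1.aestronglyMeasurable
    (hΦ.comp ((hm j).prodMk (hm (j + 1)))).1.aestronglyMeasurable ?_
  rw [hX.integral_prod_step j hΦ.norm_sq]
  refine integral_mono (((hΦ.kernel_prod (P j)).comp (hm j)).norm_sq.integrable μ)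
    (((hΦ.norm_sq).kernel_prod (P j) |>.comp (hm j)).integrable μ) fun ω => ?_
  exact norm_integral_sq_le_of_isProbabilityMeasure (hΦ.comp measurable_prodMk_left)

lemma lpNorm_kernel_le (hX : IsMarkovChain μ X P) (j : ℕ) {u : 𝒳 (j + 1) → E}
    (hu : BddMeas u) :
    lpNorm (fun ω => ∫ y, u y ∂P j (X j ω)) 2 μ ≤ lpNorm (fun ω => u (X (j + 1) ω)) 2 μ :=
  hX.lpNorm_kernel_prod_le j (hu.comp measurable_snd)

/-- The `n₀`-step transition operators contract centered functions in `L²`. -/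
lemma lpNorm_stepKernel_le_sqrt_mul (hX : IsMarkovChain μ X P) {n₀ : ℕ}
    {γ : ℝ} (hγ : γ ∈ Set.Ioo (0 : ℝ) 1) {m : ∀ j, Measure (𝒳 j)}
    (hm : ∀ j, IsProbabilityMeasure (m j)) (hD : DoeblinMinorization P n₀ γ m) (j : ℕ)
    {u : 𝒳 (j + n₀) → ℂ} (hu : BddMeas u) (hu0 : ∫ ω, u (X (j + n₀) ω) ∂μ = 0) :
    lpNorm (fun ω => ∫ y, u y ∂stepKernel P j n₀ (X j ω)) 2 μ
      ≤ √(1 - γ) * lpNorm (fun ω => u (X (j + n₀) ω)) 2 μ := by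
  have := isMarkovKernel_stepKernel hX.isMarkovKernel j n₀
  have hXm := hX.measurable
  set v : Ω → ℂ := fun ω => ∫ y, u y ∂stepKernel P j n₀ (X j ω) with hv
  have hvb : BddMeas v := (hu.kernel _).comp (hXm j)
  have hv0 : ∫ ω, v ω ∂μ = 0 := (hX.integral_stepKernel j n₀ hu).trans hu0
  set c : ℂ := γ • ∫ x, u x ∂m (j + n₀) with hc
  have h1 : ∫ ω, ‖v ω - c‖ ^ 2 ∂μ = (∫ ω, ‖v ω‖ ^ 2 ∂μ) + ‖c‖ ^ 2 := by
    have hinner : Integrable (fun ω => 2 * inner ℝ c (v ω)) μ :=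
      ((hvb.integrable μ).const_inner c).const_mul 2
    have e : ∀ ω, ‖v ω - c‖ ^ 2 = ‖v ω‖ ^ 2 - 2 * inner ℝ c (v ω) + ‖c‖ ^ 2 := fun ω => by
      rw [norm_sub_sq_real, real_inner_comm]
    simp_rw [e]
    rw [integral_add (by exact (hvb.norm_sq.integrable μ).sub hinner) (integrable_const _),
      integral_sub (hvb.norm_sq.integrable μ) hinner, integral_const_mul,
      integral_inner (hvb.integrable μ), hv0]
    simp
  have h2 : ∫ ω, ‖v ω - c‖ ^ 2 ∂μ ≤ (1 - γ) * ∫ ω, ‖u (X (j + n₀) ω)‖ ^ 2 ∂μ := by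
    rw [← hX.integral_stepKernel j n₀ hu.norm_sq, ← integral_const_mul]
    refine integral_mono ((hvb.sub (.const c)).norm_sq.integrable μ)
      (((hu.norm_sq.kernel _).comp (hXm j)).integrable μ |>.const_mul _) fun ω => ?_
    exact norm_integral_sub_sq_le_of_minorization hγ.1.le hγ.2 (hD j (X j ω)) hu
  rw [← lpNorm_two_sq (hu.comp (hXm (j + n₀))).1.aestronglyMeasurable, h1,
    ← lpNorm_two_sq hvb.1.aestronglyMeasurable] at h2
  refine (pow_le_pow_iff_left₀ lpNorm_nonneg
    (mul_nonneg (Real.sqrt_nonneg _) lpNorm_nonneg) two_ne_zero).1 ?_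
  rw [mul_pow, Real.sq_sqrt (by linarith [hγ.2])]
  nlinarith [sq_nonneg ‖c‖]

lemma lpNorm_le_of_backward_recursion (hX : IsMarkovChain μ X P) {n₀ : ℕ}
    {γ : ℝ} (hγ : γ ∈ Set.Ioo (0 : ℝ) 1) {m : ∀ j, Measure (𝒳 j)}
    (hm : ∀ j, IsProbabilityMeasure (m j)) (hD : DoeblinMinorization P n₀ γ m)
    {u p : ∀ j, 𝒳 j → ℂ} (hu : ∀ j, BddMeas (u j)) (hp : ∀ j, BddMeas (p j))
    (hrec : ∀ j x, u j x = p j x + ∫ y, u (j + 1) y ∂P j x)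
    (j : ℕ) (hu0 : ∫ ω, u (j + n₀) (X (j + n₀) ω) ∂μ = 0) :
    lpNorm (fun ω => u j (X j ω)) 2 μ
      ≤ ∑ i ∈ Finset.range n₀, lpNorm (fun ω => p (j + i) (X (j + i) ω)) 2 μ
        + √(1 - γ) * lpNorm (fun ω => u (j + n₀) (X (j + n₀) ω)) 2 μ := by
  have := isMarkovKernel_stepKernel hX.isMarkovKernel j
  have hXm := hX.measurable
  have hb : ∀ i ∈ Finset.range n₀,
      MemLp (fun ω => ∫ y, p (j + i) y ∂stepKernel P j i (X j ω)) 2 μ :=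
    fun i _ => (((hp (j + i)).kernel (stepKernel P j i)).comp (hXm j)).memLp μ 2
  set A : Ω → ℂ :=
    ∑ i ∈ Finset.range n₀, fun ω => ∫ y, p (j + i) y ∂stepKernel P j i (X j ω) with hA
  set R : Ω → ℂ := fun ω => ∫ y, u (j + n₀) y ∂stepKernel P j n₀ (X j ω) with hR
  have e : (fun ω => u j (X j ω)) = A + R := by
    funext ω
    rw [eq_sum_integral_stepKernel hX.isMarkovKernel hu hp hrec j n₀ (X j ω), Pi.add_apply, hA,
      Finset.sum_apply]
  have hAm : MemLp A 2 μ := memLp_finsetSum' _ hb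
  have h1 : lpNorm A 2 μ
      ≤ ∑ i ∈ Finset.range n₀, lpNorm (fun ω => p (j + i) (X (j + i) ω)) 2 μ :=
    (lpNorm_sum_le hb (by norm_num)).trans
      (Finset.sum_le_sum fun i _ => hX.lpNorm_stepKernel_le j i (hp (j + i)))
  have h2 : lpNorm R 2 μ ≤ √(1 - γ) * lpNorm (fun ω => u (j + n₀) (X (j + n₀) ω)) 2 μ :=
    hX.lpNorm_stepKernel_le_sqrt_mul hγ hm hD j (hu _) hu0
  rw [e]
  exact (lpNorm_add_le hAm (by norm_num)).trans (add_le_add h1 h2)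

end IsMarkovChain

section BackwardRecursion

variable {𝒳 : ℕ → Type*} {E : Type*}

/-- `r` steps of the backward recursion `w j = T j (w (j + 1))` with constant terminal value. -/
def backwardIter (T : ∀ j, (𝒳 (j + 1) → E) → 𝒳 j → E) (e : E) : ∀ (_ : ℕ) (j : ℕ), 𝒳 j → E
  | 0, _ => fun _ => e
  | r + 1, j => T j (backwardIter T e r (j + 1))

lemma exists_backward_recursion [∀ j, MeasurableSpace (𝒳 j)] [NormedAddCommGroup E]
    (T : ∀ j, (𝒳 (j + 1) → E) → 𝒳 j → E) (hT : ∀ j u, BddMeas u → BddMeas (T j u)) (e : E)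
    (n : ℕ) :
    ∃ w : ∀ j, 𝒳 j → E, (∀ j, BddMeas (w j)) ∧ (∀ j, n ≤ j → ∀ x, w j x = e) ∧
      ∀ j, j < n → ∀ x, w j x = T j (w (j + 1)) x := by
  have hb : ∀ r j, BddMeas (backwardIter T e r j) := by
    intro r
    induction r with
    | zero => exact fun j => BddMeas.const e
    | succ r ih => exact fun j => hT j _ (ih (j + 1))
  refine ⟨fun j => backwardIter T e (n - j) j, fun j => hb _ _, fun j hj x => ?_,
    fun j hj x => ?_⟩
  · simp only [Nat.sub_eq_zero_of_le hj, backwardIter]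
  · have : n - j = n - (j + 1) + 1 := by omega
    simp only [this, backwardIter]

end BackwardRecursion

section Sequences

lemma sum_range_add_le {s : ℕ → ℝ} (hs : ∀ j, 0 ≤ s j) {n : ℕ} (hn : ∀ j, n ≤ j → s j = 0)
    (i : ℕ) : ∑ j ∈ Finset.range n, s (j + i) ≤ ∑ j ∈ Finset.range n, s j := by
  have h1 : ∑ j ∈ Finset.range n, s (j + i) ≤ ∑ j ∈ Finset.range (n + i), s j := by
    rw [add_comm n i, Finset.sum_range_add]
    simp only [add_comm i]
    exact le_add_of_nonneg_left (Finset.sum_nonneg fun j _ => hs j)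
  rw [Finset.sum_range_add, Finset.sum_eq_zero (s := Finset.range i)
    (fun j _ => hn (n + j) (by omega)), add_zero] at h1
  exact h1

lemma sum_sq_le_of_contracting_recursion {a b d : ℕ → ℝ} {n n₀ : ℕ} {ρ c B : ℝ}
    (hρ0 : 0 ≤ ρ) (hρ : ρ < 1) (ha : ∀ j, 0 ≤ a j) (hb : ∀ j, 0 ≤ b j)
    (han : ∀ j, n ≤ j → a j = 0) (hdn : ∀ j, n ≤ j → d j = 0)
    (hrec : ∀ j, a j ≤ ∑ i ∈ Finset.range n₀, b (j + i) + ρ * a (j + n₀))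
    (hbd : ∀ j, b j ≤ c * (d j + B * a (j + 1)))
    (hc : (2 * c * n₀ * B) ^ 2 ≤ (1 - ρ) ^ 2) :
    ∑ j ∈ Finset.range n, a j ^ 2
      ≤ (2 * c * n₀ / (1 - ρ)) ^ 2 * ∑ j ∈ Finset.range n, d j ^ 2 := by
  set A := ∑ j ∈ Finset.range n, a j ^ 2 with hA
  set S := ∑ j ∈ Finset.range n, d j ^ 2 with hS
  have hτ : 0 < 1 - ρ := by linarith
  have hA0 : 0 ≤ A := Finset.sum_nonneg fun j _ => sq_nonneg _
  have hbsq : ∀ j, b j ^ 2 ≤ 2 * c ^ 2 * (d j ^ 2 + B ^ 2 * a (j + 1) ^ 2) := fun j => by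
    have h1 := pow_le_pow_left₀ (hb j) (hbd j) 2
    nlinarith [mul_nonneg (sq_nonneg c) (sq_nonneg (d j - B * a (j + 1)))]
  have h1 : ∀ j, a j ^ 2 ≤ n₀ / (1 - ρ) * ∑ i ∈ Finset.range n₀, b (j + i) ^ 2
      + ρ * a (j + n₀) ^ 2 := fun j => by
    set x := ∑ i ∈ Finset.range n₀, b (j + i) with hx
    have hx2 : x ^ 2 ≤ n₀ * ∑ i ∈ Finset.range n₀, b (j + i) ^ 2 := by
      simpa using sq_sum_le_card_mul_sum_sq (s := Finset.range n₀) (f := fun i => b (j + i))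
    have h2 := pow_le_pow_left₀ (ha j) (hrec j) 2
    have h3 : (x + ρ * a (j + n₀)) ^ 2 ≤ x ^ 2 / (1 - ρ) + ρ * a (j + n₀) ^ 2 := by
      have h4 : x ^ 2 / (1 - ρ) + ρ * a (j + n₀) ^ 2 - (x + ρ * a (j + n₀)) ^ 2
          = ρ / (1 - ρ) * (x - (1 - ρ) * a (j + n₀)) ^ 2 := by
        field_simp
        ring
      have h5 : 0 ≤ ρ / (1 - ρ) * (x - (1 - ρ) * a (j + n₀)) ^ 2 := by positivity
      linarith
    have h6 : x ^ 2 / (1 - ρ) ≤ n₀ / (1 - ρ) * ∑ i ∈ Finset.range n₀, b (j + i) ^ 2 := by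
      rw [div_mul_eq_mul_div]
      exact div_le_div_of_nonneg_right hx2 hτ.le
    linarith
  have hshift : ∀ i, ∑ j ∈ Finset.range n, a (j + i) ^ 2 ≤ A := fun i =>
    sum_range_add_le (s := fun j => a j ^ 2) (fun j => sq_nonneg _)
      (fun j hj => by simp [han j hj]) i
  have hshift' : ∀ i, ∑ j ∈ Finset.range n, d (j + i) ^ 2 ≤ S := fun i =>
    sum_range_add_le (s := fun j => d j ^ 2) (fun j => sq_nonneg _)
      (fun j hj => by simp [hdn j hj]) i
  have h2 : ∀ i, ∑ j ∈ Finset.range n, b (j + i) ^ 2 ≤ 2 * c ^ 2 * (S + B ^ 2 * A) := fun i => by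
    refine (Finset.sum_le_sum fun j _ => hbsq (j + i)).trans ?_
    rw [← Finset.mul_sum, Finset.sum_add_distrib, ← Finset.mul_sum]
    refine mul_le_mul_of_nonneg_left (add_le_add (hshift' i) ?_) (by positivity)
    refine mul_le_mul_of_nonneg_left ?_ (sq_nonneg B)
    simpa only [add_assoc] using hshift (i + 1)
  have h3 : A ≤ n₀ / (1 - ρ) * (n₀ * (2 * c ^ 2 * (S + B ^ 2 * A))) + ρ * A := by
    refine (Finset.sum_le_sum fun j _ => h1 j).trans ?_
    rw [Finset.sum_add_distrib, ← Finset.mul_sum, ← Finset.mul_sum, Finset.sum_comm]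
    refine add_le_add (mul_le_mul_of_nonneg_left ?_ (by positivity))
      (mul_le_mul_of_nonneg_left (hshift n₀) hρ0)
    refine (Finset.sum_le_sum fun i _ => h2 i).trans ?_
    simp
  have h4 : (1 - ρ) ^ 2 * A ≤ 2 * n₀ ^ 2 * c ^ 2 * (S + B ^ 2 * A) := by
    have : n₀ / (1 - ρ) * (n₀ * (2 * c ^ 2 * (S + B ^ 2 * A)))
        = (2 * n₀ ^ 2 * c ^ 2 * (S + B ^ 2 * A)) / (1 - ρ) := by
      ring
    rw [this] at h3
    have h5 : (1 - ρ) * A ≤ (2 * n₀ ^ 2 * c ^ 2 * (S + B ^ 2 * A)) / (1 - ρ) := by linarith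
    rw [le_div_iff₀ hτ] at h5
    linarith
  have h5 : (2 * c * n₀ * B) ^ 2 * A ≤ (1 - ρ) ^ 2 * A := mul_le_mul_of_nonneg_right hc hA0
  rw [div_pow, div_mul_eq_mul_div, le_div_iff₀ (by positivity)]
  nlinarith

end Sequences

section OneStep

variable {Ω : Type*} {mΩ : MeasurableSpace Ω} {μ : Measure Ω} [IsProbabilityMeasure μ]
  {D : Ω → ℝ} {V : Ω → ℂ} {B : ℝ} {z : ℂ}

lemma norm_cexp_mul_sub_one_le {x : ℝ} (hx : |x| ≤ B) (hz : ‖z‖ * B ≤ 1) :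
    ‖Complex.exp (z * x) - 1‖ ≤ 2 * ‖z‖ * |x| := by
  have h : ‖z * (x : ℂ)‖ = ‖z‖ * |x| := by simp
  have := Complex.norm_exp_sub_one_le (x := z * x)
    (by rw [h]; exact (mul_le_mul_of_nonneg_left hx (norm_nonneg z)).trans hz)
  rw [h] at this
  linarith

lemma BddMeas.cexp_mul_ofReal {α : Type*} [MeasurableSpace α] {D : α → ℝ} (hD : BddMeas D)
    (z : ℂ) : BddMeas (fun x => Complex.exp (z * D x)) :=
  ((BddMeas.const z).mul hD.ofReal).cexp

lemma lpNorm_exp_sub_one_mul_le (hD : BddMeas D) (hDB : ∀ ω, |D ω| ≤ B) (hV : BddMeas V)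
    (hz : ‖z‖ * B ≤ 1) :
    lpNorm (fun ω => (Complex.exp (z * D ω) - 1) * (1 + V ω)) 2 μ
      ≤ 2 * ‖z‖ * (lpNorm D 2 μ + B * lpNorm V 2 μ) := by
  have hB : ∀ ω, 0 ≤ B := fun ω => (abs_nonneg _).trans (hDB ω)
  obtain ⟨ω₀⟩ : Nonempty Ω := nonempty_of_isProbabilityMeasure μ
  have hB := hB ω₀
  have hDn : MemLp (fun ω => ‖D ω‖) 2 μ := (hD.memLp μ 2).norm
  have hVn : MemLp (fun ω => B * ‖V ω‖) 2 μ := (hV.memLp μ 2).norm.const_mul B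
  have hsum : MemLp (fun ω => 2 * ‖z‖ * (‖D ω‖ + B * ‖V ω‖)) 2 μ := (hDn.add hVn).const_mul _
  refine (lpNorm_mono_real hsum fun ω => ?_).trans ?_
  · have h1 := norm_cexp_mul_sub_one_le (hDB ω) hz
    rw [norm_mul, Real.norm_eq_abs]
    have h2 : ‖1 + V ω‖ ≤ 1 + ‖V ω‖ := by simpa using norm_add_le (1 : ℂ) (V ω)
    calc ‖Complex.exp (z * D ω) - 1‖ * ‖1 + V ω‖ ≤ (2 * ‖z‖ * |D ω|) * (1 + ‖V ω‖) :=
          mul_le_mul h1 h2 (norm_nonneg _) (by positivity)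
      _ = 2 * ‖z‖ * (|D ω| + |D ω| * ‖V ω‖) := by ring
      _ ≤ 2 * ‖z‖ * (|D ω| + B * ‖V ω‖) := by
          gcongr
          exact hDB ω
  · have e1 : lpNorm (fun ω => 2 * ‖z‖ * (‖D ω‖ + B * ‖V ω‖)) 2 μ
        = 2 * ‖z‖ * lpNorm (fun ω => ‖D ω‖ + B * ‖V ω‖) 2 μ := by
      have := lpNorm_const_smul (p := 2) (2 * ‖z‖) (fun ω => ‖D ω‖ + B * ‖V ω‖) μ
      simpa [Pi.smul_def, abs_of_nonneg] using this
    have e2 : lpNorm (fun ω => B * ‖V ω‖) 2 μ = B * lpNorm V 2 μ := by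
      have := lpNorm_const_smul (p := 2) B (fun ω => ‖V ω‖) μ
      rw [lpNorm_norm hV.1.aestronglyMeasurable] at this
      simpa [Pi.smul_def, abs_of_nonneg hB] using this
    have h3 := lpNorm_add_le (g := fun ω => B * ‖V ω‖) hDn (by norm_num)
    rw [e2, lpNorm_norm hD.1.aestronglyMeasurable] at h3
    rw [e1]
    exact mul_le_mul_of_nonneg_left h3 (by positivity)

lemma norm_integral_exp_sub_one_mul_le (hD : BddMeas D) (hDB : ∀ ω, |D ω| ≤ B)
    (hD0 : ∫ ω, D ω ∂μ = 0) (hV : BddMeas V) (hz : ‖z‖ * B ≤ 1) :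
    ‖∫ ω, (Complex.exp (z * D ω) - 1) * (1 + V ω) ∂μ‖
      ≤ 2 * ‖z‖ ^ 2 * lpNorm D 2 μ ^ 2 + lpNorm V 2 μ ^ 2 := by
  have hexp := (hD.cexp_mul_ofReal z).sub (.const 1)
  have hzD : BddMeas (fun ω => z * (D ω : ℂ)) := (BddMeas.const z).mul hD.ofReal
  have hzD0 : ∫ ω, z * (D ω : ℂ) ∂μ = 0 := by
    rw [integral_const_mul, integral_complex_ofReal, hD0]
    simp
  have e : ∫ ω, (Complex.exp (z * D ω) - 1) * (1 + V ω) ∂μ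
      = ∫ ω, ((Complex.exp (z * D ω) - 1 - z * D ω) + (Complex.exp (z * D ω) - 1) * V ω) ∂μ := by
    have : ∀ ω, (Complex.exp (z * D ω) - 1) * (1 + V ω)
        = ((Complex.exp (z * D ω) - 1 - z * D ω) + (Complex.exp (z * D ω) - 1) * V ω)
          + z * D ω := fun ω => by ring
    simp_rw [this]
    rw [integral_add (((hexp.sub hzD).add (hexp.mul hV)).integrable μ) (hzD.integrable μ), hzD0,
      add_zero]
  rw [e, lpNorm_two_sq hD.1.aestronglyMeasurable, lpNorm_two_sq hV.1.aestronglyMeasurable,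
    ← integral_const_mul, ← integral_add ((hD.norm_sq.integrable μ).const_mul _)
      (hV.norm_sq.integrable μ)]
  refine norm_integral_le_of_norm_le (((hD.norm_sq.integrable μ).const_mul _).add
    (hV.norm_sq.integrable μ)) (ae_of_all _ fun ω => ?_)
  have hn : ‖z * (D ω : ℂ)‖ = ‖z‖ * |D ω| := by simp
  have h1 := norm_cexp_mul_sub_one_le (hDB ω) hz
  have h2 := Complex.norm_exp_sub_one_sub_id_le (x := z * D ω)
    (by rw [hn]; exact (mul_le_mul_of_nonneg_left (hDB ω) (norm_nonneg z)).trans hz)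
  rw [hn] at h2
  refine (norm_add_le _ _).trans ?_
  rw [norm_mul, Real.norm_eq_abs]
  have h3 : ‖Complex.exp (z * D ω) - 1‖ * ‖V ω‖ ≤ 2 * ‖z‖ * |D ω| * ‖V ω‖ :=
    mul_le_mul_of_nonneg_right h1 (norm_nonneg _)
  nlinarith [sq_nonneg (‖z‖ * |D ω| - ‖V ω‖)]

lemma lpNorm_two_le_of_forall_abs_le (hDB : ∀ ω, |D ω| ≤ B) :
    lpNorm D 2 μ ≤ B := by
  obtain ⟨ω₀⟩ : Nonempty Ω := nonempty_of_isProbabilityMeasure μ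
  have hB := (abs_nonneg _).trans (hDB ω₀)
  refine (lpNorm_mono_real (BddMeas.const B |>.memLp μ 2) hDB).trans ?_
  rw [lpNorm_const' (by simp) (by simp)]
  simp [abs_of_nonneg hB]

end OneStep

section Increments

variable {𝒳 : ℕ → Type*} [∀ j, MeasurableSpace (𝒳 j)]

/-- The increment `g (j + 1) (y) - (P j g (j + 1)) (x)` attached to a transition `x → y` at
time `j`. -/
noncomputable def mgIncr (P : ∀ j, Kernel (𝒳 j) (𝒳 (j + 1))) (g : ∀ j, 𝒳 j → ℝ) (j : ℕ)
    (p : 𝒳 j × 𝒳 (j + 1)) : ℝ :=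
  g (j + 1) p.2 - ∫ y, g (j + 1) y ∂P j p.1

variable {P : ∀ j, Kernel (𝒳 j) (𝒳 (j + 1))} {g : ∀ j, 𝒳 j → ℝ}

lemma bddMeas_mgIncr (hP : ∀ j, IsMarkovKernel (P j)) (hg : ∀ j, BddMeas (g j)) (j : ℕ) :
    BddMeas (mgIncr P g j) :=
  ((hg (j + 1)).comp measurable_snd).sub (((hg (j + 1)).kernel (P j)).comp measurable_fst)

lemma abs_sub_integral_le {α : Type*} [MeasurableSpace α] {ν : Measure α} [IsProbabilityMeasure ν]
    {u : α → ℝ} (hu : BddMeas u) {B : ℝ} (hB : ∀ x y, u x - u y ≤ B) (x : α) :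
    |u x - ∫ y, u y ∂ν| ≤ B := by
  have e : u x - ∫ y, u y ∂ν = ∫ y, (u x - u y) ∂ν := by
    rw [integral_sub (integrable_const _) (hu.integrable ν)]
    simp
  rw [e]
  simpa using norm_integral_le_of_norm_le_const (μ := ν) (f := fun y => u x - u y) (C := B)
    (ae_of_all _ fun y => abs_le.2 ⟨by linarith [hB y x], hB x y⟩)

lemma abs_mgIncr_le (hP : ∀ j, IsMarkovKernel (P j)) (hg : ∀ j, BddMeas (g j)) {B : ℝ}
    (hB : ∀ j x y, g j x - g j y ≤ B) (j : ℕ) (p : 𝒳 j × 𝒳 (j + 1)) : |mgIncr P g j p| ≤ B :=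
  abs_sub_integral_le (hg (j + 1)) (hB (j + 1)) p.2

end Increments

namespace IsMarkovChain

variable {Ω : Type*} [mΩ : MeasurableSpace Ω] {𝒳 : ℕ → Type*} [∀ j, MeasurableSpace (𝒳 j)]
  {μ : Measure Ω} {X : ∀ j, Ω → 𝒳 j} {P : ∀ j, Kernel (𝒳 j) (𝒳 (j + 1))} {g : ∀ j, 𝒳 j → ℝ}

lemma bddMeas_mgIncr_comp (hX : IsMarkovChain μ X P) (hg : ∀ j, BddMeas (g j)) (j : ℕ) :
    BddMeas (fun ω => mgIncr P g j (X j ω, X (j + 1) ω)) :=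
  (bddMeas_mgIncr hX.isMarkovKernel hg j).comp ((hX.measurable j).prodMk (hX.measurable (j + 1)))

variable [IsProbabilityMeasure μ]

lemma integral_mgIncr (hX : IsMarkovChain μ X P) (hg : ∀ j, BddMeas (g j)) (j : ℕ) :
    ∫ ω, mgIncr P g j (X j ω, X (j + 1) ω) ∂μ = 0 := by
  have := hX.isMarkovKernel j
  have h1 := ((hg (j + 1)).comp (hX.measurable (j + 1))).integrable μ
  have h2 := (((hg (j + 1)).kernel (P j)).comp (hX.measurable j)).integrable μ
  simp only [mgIncr]
  rw [integral_sub h1 h2, hX.integral_kernel j (hg (j + 1)), sub_self]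

/-- One step of the normalized backward recursion for the perturbed transition operators. -/
lemma perturbed_step (hX : IsMarkovChain μ X P) (hg : ∀ j, BddMeas (g j)) {B : ℝ}
    (hB : ∀ j x y, g j x - g j y ≤ B) {z : ℂ} (hz : ‖z‖ * B ≤ 1 / 8) {j : ℕ}
    {w : 𝒳 (j + 1) → ℂ} (hw : BddMeas w) {h : 𝒳 j → ℂ}
    (hrec : ∀ x, h x = ∫ y, Complex.exp (z * mgIncr P g j (x, y)) * w y ∂P j x)
    {F F' : ℂ} (hF : F = ∫ ω, h (X j ω) ∂μ) (hF' : F' = ∫ ω, w (X (j + 1) ω) ∂μ) (hF0 : F' ≠ 0)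
    {d a : ℝ} (hd : d = lpNorm (fun ω => mgIncr P g j (X j ω, X (j + 1) ω)) 2 μ)
    (ha : a = lpNorm (fun ω => w (X (j + 1) ω) / F' - 1) 2 μ) (ha1 : a ≤ 1) :
    F ≠ 0 ∧ ‖F / F' - 1‖ ≤ 1 / 2 ∧ ‖F / F' - 1‖ ≤ 2 * ‖z‖ ^ 2 * d ^ 2 + a ^ 2 ∧
      lpNorm (fun ω => h (X j ω) / F - 1 - ∫ y, (w y / F' - 1) ∂P j (X j ω)) 2 μ
        ≤ 12 * ‖z‖ * (d + B * a) := by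
  have := hX.isMarkovKernel j
  have hXm := hX.measurable
  have hz1 : ‖z‖ * B ≤ 1 := hz.trans (by norm_num)
  set D : Ω → ℝ := fun ω => mgIncr P g j (X j ω, X (j + 1) ω) with hDdef
  have hD : BddMeas D := hX.bddMeas_mgIncr_comp hg j
  have hDB : ∀ ω, |D ω| ≤ B := fun ω => abs_mgIncr_le hX.isMarkovKernel hg hB j _
  have hD0 : ∫ ω, D ω ∂μ = 0 := hX.integral_mgIncr hg j
  have hdB : d ≤ B := hd ▸ lpNorm_two_le_of_forall_abs_le hDB
  have hd0 : 0 ≤ d := hd ▸ lpNorm_nonneg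
  have ha0 : 0 ≤ a := ha ▸ lpNorm_nonneg
  have hB0 : 0 ≤ B := hd0.trans hdB
  set v : 𝒳 (j + 1) → ℂ := fun y => w y / F' - 1 with hvdef
  have hv : BddMeas v := by
    simp only [hvdef, div_eq_mul_inv]
    exact (hw.mul (.const _)).sub (.const 1)
  set V : Ω → ℂ := fun ω => v (X (j + 1) ω) with hVdef
  have hV : BddMeas V := hv.comp (hXm (j + 1))
  have hV0 : ∫ ω, V ω ∂μ = 0 := by
    simp only [hVdef, hvdef]
    rw [integral_sub (((hw.comp (hXm (j + 1))).integrable μ).div_const _) (integrable_const _),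
      integral_div, ← hF', div_self hF0]
    simp
  set Φ : 𝒳 j × 𝒳 (j + 1) → ℂ :=
    fun p => (Complex.exp (z * mgIncr P g j p) - 1) * (1 + v p.2) with hΦdef
  have hΦ : BddMeas Φ :=
    (((bddMeas_mgIncr hX.isMarkovKernel hg j).cexp_mul_ofReal z).sub (.const 1)).mul
      ((BddMeas.const 1).add (hv.comp measurable_snd))
  set q : Ω → ℂ := fun ω => ∫ y, Φ (X j ω, y) ∂P j (X j ω) with hqdef
  have hq : BddMeas q := (hΦ.kernel_prod (P j)).comp (hXm j)
  set Q : Ω → ℂ := fun ω => ∫ y, v y ∂P j (X j ω) with hQdef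
  have hQ : BddMeas Q := (hv.kernel (P j)).comp (hXm j)
  have hq1 : lpNorm q 2 μ ≤ 2 * ‖z‖ * (d + B * a) := by
    rw [hd, ha]
    exact (hX.lpNorm_kernel_prod_le j hΦ).trans (lpNorm_exp_sub_one_mul_le hD hDB hV hz1)
  have hq2 : lpNorm q 2 μ ≤ 1 / 2 := by
    have h1 : B * a ≤ B := mul_le_of_le_one_right hB0 ha1
    have h2 : 2 * ‖z‖ * (d + B * a) ≤ 2 * ‖z‖ * (B + B) := by gcongr
    linarith
  set ε : ℂ := ∫ ω, q ω ∂μ with hε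
  have hε1 : ‖ε‖ ≤ lpNorm q 2 μ := norm_integral_le_lpNorm_two hq
  have hε2 : ‖ε‖ ≤ 2 * ‖z‖ ^ 2 * d ^ 2 + a ^ 2 := by
    rw [hd, ha, hε, hqdef, ← hX.integral_prod_step j hΦ]
    exact norm_integral_exp_sub_one_mul_le hD hDB hD0 hV hz1
  have hhq : ∀ ω, h (X j ω) = F' * (1 + Q ω + q ω) := fun ω => by
    have i1 : Integrable v (P j (X j ω)) := hv.integrable _
    have i2 : Integrable (fun y => Φ (X j ω, y)) (P j (X j ω)) :=
      (hΦ.comp measurable_prodMk_left).integrable _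
    have e1 : ∀ y, Complex.exp (z * mgIncr P g j (X j ω, y)) * w y
        = F' * (1 + v y + Φ (X j ω, y)) := fun y => by
      simp only [hΦdef, hvdef]
      field_simp
      ring
    rw [hrec, integral_congr_ae (ae_of_all _ e1), integral_const_mul,
      integral_add (by exact (integrable_const 1).add i1) i2,
      integral_add (integrable_const 1) i1]
    simp [hQdef, hqdef]
  have hQ0 : ∫ ω, Q ω ∂μ = 0 := (hX.integral_kernel j hv).trans hV0
  have hFε : F = F' * (1 + ε) := by
    rw [hF, integral_congr_ae (ae_of_all _ hhq), integral_const_mul,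
      integral_add (by exact (integrable_const 1).add (hQ.integrable μ)) (hq.integrable μ),
      integral_add (integrable_const 1) (hQ.integrable μ), hQ0]
    simp [hε]
  have hratio : F / F' - 1 = ε := by
    rw [hFε]
    field_simp
    ring
  have hεhalf : ‖ε‖ ≤ 1 / 2 := hε1.trans hq2
  have hε0 : 1 / 2 ≤ ‖1 + ε‖ := by
    have := norm_sub_le (1 + ε) ε
    simp only [add_sub_cancel_right, norm_one] at this
    linarith
  have hne : 1 + ε ≠ 0 := fun h0 => by
    rw [h0, norm_zero] at hε0
    norm_num at hε0
  refine ⟨hFε ▸ mul_ne_zero hF0 hne, hratio ▸ hεhalf, hratio ▸ hε2, ?_⟩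
  have hQ1 : lpNorm Q 2 μ ≤ 1 := (hX.lpNorm_kernel_le j hv).trans (ha ▸ ha1)
  have e3 : (fun ω => h (X j ω) / F - 1 - Q ω)
      = (1 + ε)⁻¹ • ((q + fun _ => -ε) + (-ε) • Q) := by
    funext ω
    simp only [Pi.smul_apply, Pi.add_apply, smul_eq_mul]
    rw [hhq ω, hFε]
    field_simp
    ring
  have hcst : BddMeas (fun _ : Ω => -ε) := .const _
  have hεQ : lpNorm ((-ε) • Q) 2 μ ≤ ‖ε‖ := by
    rw [lpNorm_const_smul]
    simpa using mul_le_of_le_one_right (norm_nonneg ε) hQ1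
  have hεc : lpNorm (fun _ : Ω => -ε) 2 μ ≤ ‖ε‖ := by
    rw [lpNorm_const' (by simp) (by simp)]
    simp
  have h5 : lpNorm ((q + fun _ => -ε) + (-ε) • Q) 2 μ ≤ lpNorm q 2 μ + ‖ε‖ + ‖ε‖ :=
    (lpNorm_add_le ((hq.memLp μ 2).add (hcst.memLp μ 2)) (by norm_num)).trans
      (add_le_add ((lpNorm_add_le (hq.memLp μ 2) (by norm_num)).trans
        (add_le_add le_rfl hεc)) hεQ)
  have h6 : ‖(1 + ε)⁻¹‖ ≤ 2 := by
    rw [norm_inv]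
    exact inv_le_of_inv_le₀ (by norm_num) (by linarith)
  rw [e3, lpNorm_const_smul, coe_nnnorm]
  calc ‖(1 + ε)⁻¹‖ * lpNorm ((q + fun _ => -ε) + (-ε) • Q) 2 μ
      ≤ 2 * (lpNorm q 2 μ + ‖ε‖ + ‖ε‖) := mul_le_mul h6 h5 lpNorm_nonneg (by norm_num)
    _ ≤ 12 * ‖z‖ * (d + B * a) := by linarith

lemma perturbed_recursion (hX : IsMarkovChain μ X P) {n₀ : ℕ} (hn₀ : 0 < n₀)
    {γ : ℝ} (hγ : γ ∈ Set.Ioo (0 : ℝ) 1) {m : ∀ j, Measure (𝒳 j)}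
    (hm : ∀ j, IsProbabilityMeasure (m j)) (hDoeblin : DoeblinMinorization P n₀ γ m)
    (hg : ∀ j, BddMeas (g j)) {B : ℝ} (hB1 : 1 ≤ B)
    (hB : ∀ j x y, g j x - g j y ≤ B) {n : ℕ} (hgn : ∀ j, n ≤ j → ∀ x, g j x = 0)
    {z : ℂ} (hz : ‖z‖ * B ≤ 1 / 8) (hz' : 24 * n₀ * (‖z‖ * B) ≤ 1 - √(1 - γ))
    {h : ∀ j, 𝒳 j → ℂ} (hh : ∀ j, BddMeas (h j)) (hhn : ∀ j, n ≤ j → ∀ x, h j x = 1)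
    (hrec : ∀ j x, h j x = ∫ y, Complex.exp (z * mgIncr P g j (x, y)) * h (j + 1) y ∂P j x)
    {F : ℕ → ℂ} (hF : ∀ j, F j = ∫ ω, h j (X j ω) ∂μ)
    {d a : ℕ → ℝ} (hd : ∀ j, d j = lpNorm (fun ω => mgIncr P g j (X j ω, X (j + 1) ω)) 2 μ)
    (ha : ∀ j, a j = lpNorm (fun ω => h j (X j ω) / F j - 1) 2 μ) :
    (∀ j, F j ≠ 0) ∧ (∀ j, a j ≤ 1) ∧ (∀ j, ‖F j / F (j + 1) - 1‖ ≤ 1 / 2) ∧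
      (∀ j, ‖F j / F (j + 1) - 1‖ ≤ 2 * ‖z‖ ^ 2 * d j ^ 2 + a (j + 1) ^ 2) ∧
      (∀ j, n ≤ j → a j = 0) ∧
      ∑ j ∈ Finset.range n, a j ^ 2 ≤ ∑ j ∈ Finset.range n, d j ^ 2 := by
  have hMk := hX.isMarkovKernel
  have hXm := hX.measurable
  have hstep := fun j => hX.perturbed_step hg hB hz (hh (j + 1)) (hrec j) (hF j)
    (hF (j + 1))
  have hd0 : ∀ j, 0 ≤ d j := fun j => hd j ▸ lpNorm_nonneg
  have ha0 : ∀ j, 0 ≤ a j := fun j => ha j ▸ lpNorm_nonneg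
  have hdB : ∀ j, d j ≤ B := fun j => hd j ▸
    lpNorm_two_le_of_forall_abs_le (fun ω => abs_mgIncr_le hMk hg hB j _)
  have hFn : ∀ j, n ≤ j → F j = 1 := fun j hj => by
    simp [hF, hhn j hj]
  have han : ∀ j, n ≤ j → a j = 0 := fun j hj => by
    simp [ha, hhn j hj, hFn j hj]
  have hdn : ∀ j, n ≤ j → d j = 0 := fun j hj => by
    simp [hd, mgIncr, hgn (j + 1) (by omega)]
  set ρ := √(1 - γ) with hρdef
  have hρ0 : 0 ≤ ρ := Real.sqrt_nonneg _
  have hρ1 : ρ < 1 := by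
    rw [hρdef, Real.sqrt_lt' one_pos]
    linarith [hγ.1]
  set u : ∀ j, 𝒳 j → ℂ := fun j x => h j x / F j - 1 with hudef
  have hu : ∀ j, BddMeas (u j) := fun j => by
    simp only [hudef, div_eq_mul_inv]
    exact ((hh j).mul (.const _)).sub (.const 1)
  have hu0 : ∀ j, F j ≠ 0 → ∫ ω, u j (X j ω) ∂μ = 0 := fun j hj => by
    simp only [hudef]
    rw [integral_sub ((((hh j).comp (hXm j)).integrable μ).div_const _) (integrable_const _),
      integral_div, ← hF, div_self hj]
    simp
  set p : ∀ j, 𝒳 j → ℂ := fun j x => u j x - ∫ y, u (j + 1) y ∂P j x with hpdef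
  have hp : ∀ j, BddMeas (p j) := fun j => (hu j).sub ((hu (j + 1)).kernel (P j))
  set b : ℕ → ℝ := fun j => lpNorm (fun ω => p j (X j ω)) 2 μ with hbdef
  have hrecu : ∀ j, F (j + n₀) ≠ 0 →
      a j ≤ ∑ i ∈ Finset.range n₀, b (j + i) + ρ * a (j + n₀) := fun j hj => by
    rw [ha j, ha (j + n₀)]
    exact hX.lpNorm_le_of_backward_recursion hγ hm hDoeblin hu hp
      (fun j x => by simp only [hpdef, sub_add_cancel]) j (hu0 _ hj)
  have hbd : ∀ j, F (j + 1) ≠ 0 → a (j + 1) ≤ 1 → b j ≤ 12 * ‖z‖ * (d j + B * a (j + 1)) :=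
    fun j hj1 hj2 => (hstep j hj1 (hd j) (ha (j + 1)) hj2).2.2.2
  have hbB : ∀ j, F (j + 1) ≠ 0 → a (j + 1) ≤ 1 → b j ≤ 24 * (‖z‖ * B) := fun j hj1 hj2 => by
    refine (hbd j hj1 hj2).trans ?_
    have h1 : B * a (j + 1) ≤ B := mul_le_of_le_one_right (by linarith) hj2
    have h2 : 12 * ‖z‖ * (d j + B * a (j + 1)) ≤ 12 * ‖z‖ * (B + B) := by
      gcongr
      exact hdB j
    linarith
  have key : ∀ r j, n ≤ j + r → F j ≠ 0 ∧ a j ≤ 1 := by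
    intro r
    induction r with
    | zero =>
      intro j hj
      rw [hFn j hj, han j hj]
      exact ⟨one_ne_zero, zero_le_one⟩
    | succ r ih =>
      intro j hj
      have h1 : ∀ i, F (j + i + 1) ≠ 0 ∧ a (j + i + 1) ≤ 1 := fun i => ih _ (by omega)
      refine ⟨(hstep j (h1 0).1 (hd j) (ha (j + 1)) (h1 0).2).1, ?_⟩
      obtain ⟨h2, h3⟩ : F (j + n₀) ≠ 0 ∧ a (j + n₀) ≤ 1 := ih _ (by omega)
      refine (hrecu j h2).trans ?_
      have h4 : ∑ i ∈ Finset.range n₀, b (j + i) ≤ n₀ * (24 * (‖z‖ * B)) := by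
        refine (Finset.sum_le_sum fun i _ => hbB (j + i) (h1 i).1 (h1 i).2).trans ?_
        simp
      have h5 : ρ * a (j + n₀) ≤ ρ := mul_le_of_le_one_right hρ0 h3
      linarith
  have hF0 : ∀ j, F j ≠ 0 := fun j => (key n j (by omega)).1
  have ha1 : ∀ j, a j ≤ 1 := fun j => (key n j (by omega)).2
  have hst := fun j => hstep j (hF0 (j + 1)) (hd j) (ha (j + 1)) (ha1 (j + 1))
  refine ⟨hF0, ha1, fun j => (hst j).2.1, fun j => (hst j).2.2.1, han, ?_⟩
  have hsum := sum_sq_le_of_contracting_recursion (a := a) (b := b) (d := d) (n := n) (n₀ := n₀)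
    (c := 12 * ‖z‖) (B := B) hρ0 hρ1 ha0 (fun j => lpNorm_nonneg) han hdn
    (fun j => hrecu j (hF0 _)) (fun j => hbd j (hF0 _) (ha1 _))
    (pow_le_pow_left₀ (by positivity) (by linarith) 2)
  refine hsum.trans (mul_le_of_le_one_left (Finset.sum_nonneg fun j _ => sq_nonneg _) ?_)
  have hτ : 0 < 1 - ρ := by linarith
  refine pow_le_one₀ (by positivity) ((div_le_one hτ).2 (le_trans ?_ hz'))
  have h7 : ‖z‖ ≤ ‖z‖ * B := le_mul_of_one_le_right (norm_nonneg z) hB1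
  have h8 : 24 * n₀ * ‖z‖ ≤ 24 * n₀ * (‖z‖ * B) := by gcongr
  linarith

end IsMarkovChain

lemma pastSigma_mono {Ω : Type*} {𝒳 : ℕ → Type*} [∀ j, MeasurableSpace (𝒳 j)]
    (X : ∀ j, Ω → 𝒳 j) {i j : ℕ} (hij : i ≤ j) : pastSigma X i ≤ pastSigma X j :=
  biSup_mono fun _ hk => le_trans hk hij

lemma bddMeas_pastSigma {Ω : Type*} {𝒳 : ℕ → Type*} [∀ j, MeasurableSpace (𝒳 j)] {E : Type*}
    [NormedAddCommGroup E] (X : ∀ j, Ω → 𝒳 j) {i j : ℕ} (hij : i ≤ j) {u : 𝒳 i → E}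
    (hu : BddMeas u) : @BddMeas _ _ (pastSigma X j) _ (fun ω => u (X i ω)) :=
  @BddMeas.comp _ _ _ (pastSigma X j) _ _ u hu _ (measurable_pastSigma X hij)

section Increments

variable {Ω : Type*} {𝒳 : ℕ → Type*} [∀ j, MeasurableSpace (𝒳 j)] {X : ∀ j, Ω → 𝒳 j}
  {P : ∀ j, Kernel (𝒳 j) (𝒳 (j + 1))} {g : ∀ j, 𝒳 j → ℝ}

lemma bddMeas_mgIncr_pastSigma (hP : ∀ j, IsMarkovKernel (P j)) (hg : ∀ j, BddMeas (g j)) (j : ℕ) :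
    @BddMeas _ _ (pastSigma X (j + 1)) _ (fun ω => mgIncr P g j (X j ω, X (j + 1) ω)) :=
  @BddMeas.sub _ _ (pastSigma X (j + 1)) _ _ _ (bddMeas_pastSigma X le_rfl (hg (j + 1)))
    (bddMeas_pastSigma X (Nat.le_succ j) ((hg (j + 1)).kernel (P j)))

lemma sum_eq_add_sum_mgIncr {f : ∀ j, 𝒳 j → ℝ}
    (hrec : ∀ j x, g j x = f j x + ∫ y, g (j + 1) y ∂P j x) (n : ℕ) (ω : Ω) :
    ∑ j ∈ Finset.range n, f j (X j ω)
      = g 0 (X 0 ω) - g n (X n ω)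
        + ∑ k ∈ Finset.range n, mgIncr P g k (X k ω, X (k + 1) ω) := by
  induction n with
  | zero => simp
  | succ n ih =>
    rw [Finset.sum_range_succ, Finset.sum_range_succ, ih, mgIncr]
    have := hrec n (X n ω)
    simp only
    linarith

end Increments

namespace IsMarkovChain

variable {Ω : Type*} [mΩ : MeasurableSpace Ω] {𝒳 : ℕ → Type*} [∀ j, MeasurableSpace (𝒳 j)]
  {μ : Measure Ω} [IsProbabilityMeasure μ] {X : ∀ j, Ω → 𝒳 j}
  {P : ∀ j, Kernel (𝒳 j) (𝒳 (j + 1))} {g : ∀ j, 𝒳 j → ℝ}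

/-- The perturbed backward recursion computes exponential moments of sums of increments. -/
lemma integral_mul_perturbed (hX : IsMarkovChain μ X P) (hg : ∀ j, BddMeas (g j)) {n : ℕ} {z : ℂ}
    {h : ∀ j, 𝒳 j → ℂ} (hh : ∀ j, BddMeas (h j)) (hhn : ∀ j, n ≤ j → ∀ x, h j x = 1)
    (hrec : ∀ j x, h j x = ∫ y, Complex.exp (z * mgIncr P g j (x, y)) * h (j + 1) y ∂P j x)
    (j : ℕ) {φ : Ω → ℂ} (hφ : @BddMeas _ _ (pastSigma X j) _ φ) :
    ∫ ω, φ ω * h j (X j ω) ∂μ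
      = ∫ ω, φ ω * Complex.exp
          (z * (∑ k ∈ Finset.Ico j n, mgIncr P g k (X k ω, X (k + 1) ω) : ℝ)) ∂μ := by
  suffices H : ∀ r j, n ≤ j + r → ∀ φ : Ω → ℂ, @BddMeas _ _ (pastSigma X j) _ φ →
      ∫ ω, φ ω * h j (X j ω) ∂μ
        = ∫ ω, φ ω * Complex.exp
          (z * (∑ k ∈ Finset.Ico j n, mgIncr P g k (X k ω, X (k + 1) ω) : ℝ)) ∂μ from
    H n j (by omega) φ hφ
  intro r
  induction r with
  | zero =>
    intro j hj φ _
    simp [hhn j hj, Finset.Ico_eq_empty_of_le (show n ≤ j from hj)]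
  | succ r ih =>
    intro j hj φ hφ
    rcases le_or_gt n j with hnj | hnj
    · simp [hhn j hnj, Finset.Ico_eq_empty_of_le hnj]
    have := hX.isMarkovKernel j
    set G : 𝒳 j → ℝ := fun x => ∫ y, g (j + 1) y ∂P j x with hG
    have hGb : BddMeas G := (hg (j + 1)).kernel (P j)
    set w : 𝒳 (j + 1) → ℂ := fun y => Complex.exp (z * g (j + 1) y) * h (j + 1) y with hw
    have hwb : BddMeas w := ((hg (j + 1)).cexp_mul_ofReal z).mul (hh (j + 1))
    have e1 : ∀ x, h j x = Complex.exp (-z * G x) * ∫ y, w y ∂P j x := fun x => by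
      rw [hrec, ← integral_const_mul]
      refine integral_congr_ae (ae_of_all _ fun y => ?_)
      simp only [mgIncr, hw, hG]
      rw [← mul_assoc, ← Complex.exp_add]
      congr 2
      push_cast
      ring
    have hφ1 : @BddMeas _ _ (pastSigma X j) _ (fun ω => φ ω * Complex.exp (-z * G (X j ω))) :=
      @BddMeas.mul _ (pastSigma X j) _ _ _ _ hφ
        (bddMeas_pastSigma X le_rfl (hGb.cexp_mul_ofReal (-z)))
    have hφ2 : @BddMeas _ _ (pastSigma X (j + 1)) _
        (fun ω => φ ω * Complex.exp (z * mgIncr P g j (X j ω, X (j + 1) ω))) :=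
      @BddMeas.mul _ (pastSigma X (j + 1)) _ _ _ _
        (BddMeas.mono (pastSigma_mono X (Nat.le_succ j)) hφ)
        (@BddMeas.cexp_mul_ofReal _ (pastSigma X (j + 1)) _
          (bddMeas_mgIncr_pastSigma hX.isMarkovKernel hg j) z)
    calc ∫ ω, φ ω * h j (X j ω) ∂μ
        = ∫ ω, (φ ω * Complex.exp (-z * G (X j ω))) * ∫ y, w y ∂P j (X j ω) ∂μ := by
          refine integral_congr_ae (ae_of_all _ fun ω => ?_)
          simp only [e1, mul_assoc]
      _ = ∫ ω, (φ ω * Complex.exp (-z * G (X j ω))) * w (X (j + 1) ω) ∂μ :=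
          (hX.integral_mul_step j hφ1 hwb).symm
      _ = ∫ ω, (φ ω * Complex.exp (z * mgIncr P g j (X j ω, X (j + 1) ω)))
            * h (j + 1) (X (j + 1) ω) ∂μ := by
          refine integral_congr_ae (ae_of_all _ fun ω => ?_)
          simp only [mgIncr, hw, hG]
          rw [← mul_assoc, mul_assoc (φ ω), ← Complex.exp_add]
          congr 3
          push_cast
          ring
      _ = _ := by
          rw [ih (j + 1) (by omega) _ hφ2]
          refine integral_congr_ae (ae_of_all _ fun ω => ?_)
          simp only
          rw [Finset.sum_eq_sum_Ico_succ_bot hnj, mul_assoc, ← Complex.exp_add]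
          congr 2
          push_cast
          ring

/-- Orthogonality of the martingale increments. -/
lemma integral_sq_add_sum_mgIncr (hX : IsMarkovChain μ X P) (hg : ∀ j, BddMeas (g j))
    {G : 𝒳 0 → ℝ} (hG : BddMeas G) (r : ℕ) :
    ∫ ω, (G (X 0 ω) + ∑ k ∈ Finset.range r, mgIncr P g k (X k ω, X (k + 1) ω)) ^ 2 ∂μ
      = (∫ ω, G (X 0 ω) ^ 2 ∂μ)
        + ∑ k ∈ Finset.range r, ∫ ω, mgIncr P g k (X k ω, X (k + 1) ω) ^ 2 ∂μ := by
  induction r with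
  | zero => simp
  | succ r ih =>
    have hMk := hX.isMarkovKernel
    set M : Ω → ℝ :=
      fun ω => G (X 0 ω) + ∑ k ∈ Finset.range r, mgIncr P g k (X k ω, X (k + 1) ω) with hM
    set D : Ω → ℝ := fun ω => mgIncr P g r (X r ω, X (r + 1) ω) with hD
    have hMp : @BddMeas _ _ (pastSigma X r) _ M := by
      refine @BddMeas.add _ _ (pastSigma X r) _ _ _ (bddMeas_pastSigma X (Nat.zero_le r) hG) ?_
      refine @BddMeas.sum _ _ (pastSigma X r) _ _ _ _ fun k hk => ?_
      exact BddMeas.mono (pastSigma_mono X (Finset.mem_range.1 hk))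
        (bddMeas_mgIncr_pastSigma hMk hg k)
    have hMb : BddMeas M := BddMeas.mono (pastSigma_le hX.measurable r) hMp
    have hDb : BddMeas D := hX.bddMeas_mgIncr_comp hg r
    have h1 := ((hg (r + 1)).comp (hX.measurable (r + 1)))
    have h2 := (((hg (r + 1)).kernel (P r)).comp (hX.measurable r))
    have hMD : ∫ ω, M ω * D ω ∂μ = 0 := by
      simp only [hD, mgIncr, mul_sub]
      rw [integral_sub ((hMb.mul h1).integrable μ) ((hMb.mul h2).integrable μ),
        hX.integral_mul_step r hMp (hg (r + 1)), sub_self]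
    have e : ∀ ω, (G (X 0 ω) + ∑ k ∈ Finset.range (r + 1), mgIncr P g k (X k ω, X (k + 1) ω)) ^ 2
        = M ω ^ 2 + 2 * (M ω * D ω) + D ω ^ 2 := fun ω => by
      rw [Finset.sum_range_succ, hM, hD]
      ring
    simp_rw [e]
    have hM2 : Integrable (fun ω => M ω ^ 2) μ := by simpa using hMb.norm_sq.integrable μ
    have hD2 : Integrable (fun ω => D ω ^ 2) μ := by simpa using hDb.norm_sq.integrable μ
    have hMD2 : Integrable (fun ω => 2 * (M ω * D ω)) μ := ((hMb.mul hDb).integrable μ).const_mul 2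
    rw [integral_add (by exact hM2.add hMD2) hD2, integral_add hM2 hMD2, integral_const_mul, hMD,
      ih, Finset.sum_range_succ]
    ring

end IsMarkovChain

section MomentGenerating

variable {Ω : Type*} {mΩ : MeasurableSpace Ω} {μ : Measure Ω} [IsFiniteMeasure μ]

lemma BddMeas.differentiable_integral_cexp {Z : Ω → ℝ} (hZ : BddMeas Z) :
    Differentiable ℂ (fun z : ℂ => ∫ ω, Complex.exp (z * Z ω) ∂μ) := by
  have huniv : integrableExpSet Z μ = Set.univ := by
    refine Set.eq_univ_of_forall fun t => ?_
    obtain ⟨hm, C, hC⟩ := hZ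
    refine Integrable.of_bound
      (Real.continuous_exp.comp_stronglyMeasurable (hm.const_mul t)).aestronglyMeasurable
      (Real.exp (|t| * C)) (ae_of_all _ fun ω => ?_)
    rw [Real.norm_eq_abs, Real.abs_exp]
    refine Real.exp_le_exp.2 ((le_abs_self _).trans ?_)
    rw [abs_mul]
    exact mul_le_mul_of_nonneg_left (hC ω) (abs_nonneg t)
  intro z
  exact (hasDerivAt_complexMGF (X := Z) (μ := μ) (z := z) (by simp [huniv])).differentiableAt

end MomentGenerating

namespace IsMarkovChain

variable {Ω : Type*} [mΩ : MeasurableSpace Ω] {𝒳 : ℕ → Type*} [∀ j, MeasurableSpace (𝒳 j)]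
  {μ : Measure Ω} [IsProbabilityMeasure μ] {X : ∀ j, Ω → 𝒳 j}
  {P : ∀ j, Kernel (𝒳 j) (𝒳 (j + 1))} {g : ∀ j, 𝒳 j → ℝ}

/-- Ratios of consecutive exponential moments of the tails of the martingale decomposition are
close to `1`, with errors summing to a multiple of the variance. -/
lemma exists_ratio_bounds (hX : IsMarkovChain μ X P) {n₀ : ℕ} (hn₀ : 0 < n₀)
    {γ : ℝ} (hγ : γ ∈ Set.Ioo (0 : ℝ) 1) {m : ∀ j, Measure (𝒳 j)}
    (hm : ∀ j, IsProbabilityMeasure (m j)) (hDoeblin : DoeblinMinorization P n₀ γ m)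
    (hg : ∀ j, BddMeas (g j)) {B : ℝ} (hB1 : 1 ≤ B)
    (hB : ∀ j x y, g j x - g j y ≤ B) {n : ℕ} (hgn : ∀ j, n ≤ j → ∀ x, g j x = 0)
    {z : ℂ} (hz : ‖z‖ * B ≤ 1 / 8) (hz' : 24 * n₀ * (‖z‖ * B) ≤ 1 - √(1 - γ))
    {D : ℕ → Ω → ℝ} (hD : ∀ k ω, D k ω = mgIncr P g k (X k ω, X (k + 1) ω))
    {G : Ω → ℝ} (hG : ∀ ω, G ω = g 0 (X 0 ω) - ∫ ω', g 0 (X 0 ω') ∂μ)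
    {F : ℕ → ℂ} (hF : ∀ j, F j = ∫ ω, Complex.exp (z * (∑ k ∈ Finset.Ico j n, D k ω : ℝ)) ∂μ)
    {F' : ℂ} (hF' : F' = ∫ ω, Complex.exp (z * (G ω + ∑ k ∈ Finset.Ico 0 n, D k ω : ℝ)) ∂μ) :
    (∀ j, F j ≠ 0) ∧ (∀ j, ‖F j / F (j + 1) - 1‖ ≤ 1 / 2) ∧ ‖F' / F 0 - 1‖ ≤ 1 / 2 ∧
      ‖F' / F 0 - 1‖ + ∑ j ∈ Finset.range n, ‖F j / F (j + 1) - 1‖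
        ≤ 2 * ((∫ ω, G ω ^ 2 ∂μ) + ∑ k ∈ Finset.range n, ∫ ω, D k ω ^ 2 ∂μ) := by
  have hMk := hX.isMarkovKernel
  have hXm := hX.measurable
  obtain rfl : D = fun k ω => mgIncr P g k (X k ω, X (k + 1) ω) := by
    funext k ω
    exact hD k ω
  obtain rfl : G = fun ω => g 0 (X 0 ω) - ∫ ω', g 0 (X 0 ω') ∂μ := funext hG
  set G : Ω → ℝ := fun ω => g 0 (X 0 ω) - ∫ ω', g 0 (X 0 ω') ∂μ with hGdef
  set D : ℕ → Ω → ℝ := fun k ω => mgIncr P g k (X k ω, X (k + 1) ω) with hDdef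
  obtain ⟨h, hh, hhn, hrec'⟩ := exists_backward_recursion
    (fun j (u : 𝒳 (j + 1) → ℂ) x => ∫ y, Complex.exp (z * mgIncr P g j (x, y)) * u y ∂P j x)
    (fun j u hu => BddMeas.kernel_prod
      (((bddMeas_mgIncr hMk hg j).cexp_mul_ofReal z).mul (hu.comp measurable_snd)) (P j)) 1 n
  have hrec : ∀ j x, h j x
      = ∫ y, Complex.exp (z * mgIncr P g j (x, y)) * h (j + 1) y ∂P j x := fun j x => by
    rcases lt_or_ge j n with hj | hj
    · exact hrec' j hj x
    · simp [mgIncr, hgn (j + 1) (by omega), hhn (j + 1) (by omega), hhn j hj]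
  have hFh : ∀ j, F j = ∫ ω, h j (X j ω) ∂μ := fun j => by
    have := hX.integral_mul_perturbed hg hh hhn hrec j
      (φ := fun _ => 1) (@BddMeas.const _ _ (pastSigma X j) _ 1)
    simp only [one_mul] at this
    rw [this, hF]
  set d : ℕ → ℝ := fun j => lpNorm (D j) 2 μ with hd
  set a : ℕ → ℝ := fun j => lpNorm (fun ω => h j (X j ω) / F j - 1) 2 μ with ha
  obtain ⟨hF0, ha1, hr1, hr2, han, hsum⟩ := hX.perturbed_recursion hn₀ hγ hm hDoeblin hg hB1 hB hgn
    hz hz' hh hhn hrec hFh (d := d) (a := a) (fun j => rfl) (fun j => rfl)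
  have hGb0 : BddMeas (fun x => g 0 x - ∫ ω', g 0 (X 0 ω') ∂μ) := (hg 0).sub (.const _)
  have hGb : BddMeas G := hGb0.comp (hXm 0)
  have hGB : ∀ ω, |G ω| ≤ B := fun ω =>
    abs_sub_integral_le ((hg 0).comp (hXm 0)) (fun x y => hB 0 _ _) ω
  have hG0 : ∫ ω, G ω ∂μ = 0 := by
    simp only [hGdef]
    rw [integral_sub (((hg 0).comp (hXm 0)).integrable μ) (integrable_const _)]
    simp
  set V : Ω → ℂ := fun ω => h 0 (X 0 ω) / F 0 - 1 with hVdef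
  have hV : BddMeas V := by
    simp only [hVdef, div_eq_mul_inv]
    exact (((hh 0).comp (hXm 0)).mul (.const _)).sub (.const 1)
  have hV0 : ∫ ω, V ω ∂μ = 0 := by
    simp only [hVdef]
    rw [integral_sub ((((hh 0).comp (hXm 0)).integrable μ).div_const _) (integrable_const _),
      integral_div, ← hFh, div_self (hF0 0)]
    simp
  have hz1 : ‖z‖ * B ≤ 1 := hz.trans (by norm_num)
  have hF'h : F' = ∫ ω, Complex.exp (z * G ω) * h 0 (X 0 ω) ∂μ := by
    have := hX.integral_mul_perturbed hg hh hhn hrec 0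
      (φ := fun ω => Complex.exp (z * G ω))
      (bddMeas_pastSigma X le_rfl (hGb0.cexp_mul_ofReal z))
    rw [this, hF']
    refine integral_congr_ae (ae_of_all _ fun ω => ?_)
    simp only
    rw [← Complex.exp_add]
    congr 1
    push_cast
    ring
  have hexp := (hGb.cexp_mul_ofReal z).sub (.const 1)
  have hone := (BddMeas.const (α := Ω) (1 : ℂ)).add hV
  have hratio : F' / F 0 - 1 = ∫ ω, (Complex.exp (z * G ω) - 1) * (1 + V ω) ∂μ := by
    have e1 : ∀ ω, Complex.exp (z * G ω) * h 0 (X 0 ω)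
        = F 0 * ((Complex.exp (z * G ω) - 1) * (1 + V ω) + (1 + V ω)) := fun ω => by
      simp only [hVdef]
      have := hF0 0
      field_simp
      ring
    rw [hF'h, integral_congr_ae (ae_of_all _ e1), integral_const_mul,
      integral_add ((hexp.mul hone).integrable μ) (hone.integrable μ),
      integral_add (integrable_const 1) (hV.integrable μ), hV0, mul_div_cancel_left₀ _ (hF0 0)]
    simp
  have hdG : lpNorm G 2 μ ≤ B := lpNorm_two_le_of_forall_abs_le hGB
  have hr1' : ‖F' / F 0 - 1‖ ≤ 1 / 2 := by
    rw [hratio]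
    refine (norm_integral_le_lpNorm_two (hexp.mul hone)).trans
      ((lpNorm_exp_sub_one_mul_le hGb hGB hV hz1).trans ?_)
    have h1 : B * lpNorm V 2 μ ≤ B := mul_le_of_le_one_right (by linarith) (ha1 0)
    have h2 : 2 * ‖z‖ * (lpNorm G 2 μ + B * lpNorm V 2 μ) ≤ 2 * ‖z‖ * (B + B) := by gcongr
    linarith
  have hr2' : ‖F' / F 0 - 1‖ ≤ 2 * ‖z‖ ^ 2 * lpNorm G 2 μ ^ 2 + a 0 ^ 2 := by
    rw [hratio]
    exact norm_integral_exp_sub_one_mul_le hGb hGB hG0 hV hz1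
  refine ⟨hF0, hr1, hr1', ?_⟩
  have hsqG : ∫ ω, G ω ^ 2 ∂μ = lpNorm G 2 μ ^ 2 := by
    rw [lpNorm_two_sq hGb.1.aestronglyMeasurable]
    simp
  have hsqD : ∀ k, ∫ ω, D k ω ^ 2 ∂μ = d k ^ 2 := fun k => by
    rw [hd, lpNorm_two_sq (hX.bddMeas_mgIncr_comp hg k).1.aestronglyMeasurable]
    simp [hDdef]
  rw [hsqG, Finset.sum_congr rfl fun k _ => hsqD k]
  have hz8 : ‖z‖ ≤ 1 / 8 := (le_mul_of_one_le_right (norm_nonneg z) hB1).trans hz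
  have hz2 : 2 * ‖z‖ ^ 2 ≤ 1 := by nlinarith [norm_nonneg z]
  have h1 := Finset.sum_le_sum fun j (_ : j ∈ Finset.range n) => hr2 j
  rw [Finset.sum_add_distrib, ← Finset.mul_sum] at h1
  have h2 : a 0 ^ 2 + ∑ j ∈ Finset.range n, a (j + 1) ^ 2 = ∑ j ∈ Finset.range n, a j ^ 2 := by
    rw [add_comm, ← Finset.sum_range_succ' (fun j => a j ^ 2), Finset.sum_range_succ,
      han n le_rfl]
    simp
  have hS0 : 0 ≤ ∑ j ∈ Finset.range n, d j ^ 2 := Finset.sum_nonneg fun j _ => sq_nonneg _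
  have h3 := mul_le_of_le_one_left hS0 hz2
  have h4 := mul_le_of_le_one_left (sq_nonneg (lpNorm G 2 μ)) hz2
  linarith [sq_nonneg (lpNorm G 2 μ)]

/-- A holomorphic logarithm of the centered moment generating function, of the size of the
variance. -/
lemma exists_holomorphic_log (hX : IsMarkovChain μ X P) {n₀ : ℕ} (hn₀ : 0 < n₀)
    {γ : ℝ} (hγ : γ ∈ Set.Ioo (0 : ℝ) 1) {m : ∀ j, Measure (𝒳 j)}
    (hm : ∀ j, IsProbabilityMeasure (m j)) (hDoeblin : DoeblinMinorization P n₀ γ m)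
    {f : ∀ j, 𝒳 j → ℝ} (hf : ∀ j, BddMeas (f j)) {K B : ℝ} (hK : ∀ j x, |f j x| ≤ K)
    (hB1 : 1 ≤ B) (hB : 2 * K * n₀ ≤ γ * B) {δ : ℝ} (hδ : δ * B ≤ 1 / 8)
    (hδ' : 24 * n₀ * (δ * B) ≤ 1 - √(1 - γ)) (n : ℕ) :
    ∃ L : ℂ → ℂ, L 0 = 0 ∧ DifferentiableOn ℂ L (Metric.ball 0 δ) ∧
      (∀ z ∈ Metric.ball (0 : ℂ) δ, Complex.exp (L z) = ∫ ω, Complex.exp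
        (z * (partialSum X f n ω - ∫ ω', partialSum X f n ω' ∂μ : ℝ)) ∂μ) ∧
      ∀ z ∈ Metric.ball (0 : ℂ) δ, ‖L z‖ ≤ 3 * variance (partialSum X f n) μ := by
  have hMk := hX.isMarkovKernel
  have hXm := hX.measurable
  have hK0 : 0 ≤ K := by
    obtain ⟨ω⟩ : Nonempty Ω := nonempty_of_isProbabilityMeasure μ
    exact (abs_nonneg _).trans (hK 0 (X 0 ω))
  obtain ⟨g, hg, hgn, hgrec'⟩ := exists_backward_recursion
    (fun j (u : 𝒳 (j + 1) → ℝ) x => f j x + ∫ y, u y ∂P j x)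
    (fun j u hu => (hf j).add (hu.kernel (P j))) 0 n
  set f' : ∀ j, 𝒳 j → ℝ := fun j => if j < n then f j else fun _ => 0 with hf'
  have hf'b : ∀ j, BddMeas (f' j) := fun j => by
    simp only [hf']
    split_ifs
    exacts [hf j, .const 0]
  have hf'K : ∀ j x, |f' j x| ≤ K := fun j x => by
    simp only [hf']
    split_ifs
    · exact hK j x
    · simpa using hK0
  have hgrec : ∀ j x, g j x = f' j x + ∫ y, g (j + 1) y ∂P j x := fun j x => by
    rcases lt_or_ge j n with hj | hj
    · simp only [hf', if_pos hj]
      exact hgrec' j hj x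
    · simp [hf', hj.not_gt, hgn j hj, hgn (j + 1) (by omega)]
  have hosc := sub_le_of_backward_recursion hMk hn₀ hγ hm hDoeblin hg hf'b hgrec hgn hf'K
    (by linarith) hB
  set D : ℕ → Ω → ℝ := fun k ω => mgIncr P g k (X k ω, X (k + 1) ω) with hD
  set c : ℝ := ∫ ω', g 0 (X 0 ω') ∂μ with hc
  set G : Ω → ℝ := fun ω => g 0 (X 0 ω) - c with hG
  have hDb : ∀ k, BddMeas (D k) := fun k => hX.bddMeas_mgIncr_comp hg k
  have hg0 : BddMeas (fun ω => g 0 (X 0 ω)) := (hg 0).comp (hXm 0)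
  have hGb : BddMeas G := hg0.sub (.const _)
  have hTb : ∀ j, BddMeas (fun ω => ∑ k ∈ Finset.Ico j n, D k ω) :=
    fun j => BddMeas.sum _ fun k _ => hDb k
  have hS : ∀ ω, partialSum X f n ω = g 0 (X 0 ω) + ∑ k ∈ Finset.Ico 0 n, D k ω := fun ω => by
    have h1 := sum_eq_add_sum_mgIncr (X := X) hgrec n ω
    rw [hgn n le_rfl, sub_zero] at h1
    rw [Nat.Ico_zero_eq_range, ← h1, partialSum]
    refine Finset.sum_congr rfl fun j hj => ?_
    simp [hf', Finset.mem_range.1 hj]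
  have hSm : ∫ ω, partialSum X f n ω ∂μ = c := by
    simp_rw [hS]
    rw [integral_add (hg0.integrable μ) ((hTb 0).integrable μ),
      integral_finsetSum _ fun k _ => (hDb k).integrable μ,
      Finset.sum_eq_zero fun k _ => hX.integral_mgIncr hg k, add_zero]
  have hSc : ∀ ω, partialSum X f n ω - ∫ ω', partialSum X f n ω' ∂μ
      = G ω + ∑ k ∈ Finset.Ico 0 n, D k ω := fun ω => by
    rw [hSm, hS, hG]
    ring
  have hvar : variance (partialSum X f n) μ
      = (∫ ω, G ω ^ 2 ∂μ) + ∑ k ∈ Finset.range n, ∫ ω, D k ω ^ 2 ∂μ := by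
    have hSb : BddMeas (partialSum X f n) := by
      rw [show partialSum X f n = _ from funext hS]
      exact hg0.add (hTb 0)
    rw [variance_eq_integral hSb.1.aestronglyMeasurable.aemeasurable]
    simp_rw [hSc, Nat.Ico_zero_eq_range]
    exact hX.integral_sq_add_sum_mgIncr hg (G := fun x => g 0 x - c) ((hg 0).sub (.const _)) n
  set F : ℕ → ℂ → ℂ := fun j z => ∫ ω, Complex.exp (z * (∑ k ∈ Finset.Ico j n, D k ω : ℝ)) ∂μ
    with hF
  set F' : ℂ → ℂ := fun z =>
    ∫ ω, Complex.exp (z * (G ω + ∑ k ∈ Finset.Ico 0 n, D k ω : ℝ)) ∂μ with hF'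
  have key := fun z (hz : z ∈ Metric.ball (0 : ℂ) δ) => by
    have hzδ : ‖z‖ ≤ δ := (mem_ball_zero_iff.1 hz).le
    have hzB : ‖z‖ * B ≤ δ * B := mul_le_mul_of_nonneg_right hzδ (by linarith)
    exact hX.exists_ratio_bounds hn₀ hγ hm hDoeblin hg hB1 hosc hgn (z := z) (hzB.trans hδ)
      ((mul_le_mul_of_nonneg_left hzB (by positivity)).trans hδ') (D := D) (fun k ω => rfl)
      (G := G) (fun ω => rfl) (F := fun j => F j z) (fun j => rfl) (F' := F' z) rfl
  have hFd : ∀ j, Differentiable ℂ (F j) := fun j => (hTb j).differentiable_integral_cexp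
  have hF'd : Differentiable ℂ F' := (hGb.add (hTb 0)).differentiable_integral_cexp
  have hslit : ∀ w : ℂ, ‖w - 1‖ ≤ 1 / 2 → w ∈ Complex.slitPlane := fun w hw => by
    have := Complex.mem_slitPlane_of_norm_lt_one (z := w - 1) (by linarith)
    simpa using this
  have hlog : ∀ w : ℂ, ‖w - 1‖ ≤ 1 / 2 → ‖Complex.log w‖ ≤ 3 / 2 * ‖w - 1‖ := fun w hw => by
    have := Complex.norm_log_one_add_half_le_self hw
    simpa using this
  refine ⟨fun z => Complex.log (F' z / F 0 z)
    + ∑ j ∈ Finset.range n, Complex.log (F j z / F (j + 1) z), ?_, ?_, ?_, ?_⟩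
  · simp [hF, hF']
  · intro z hz
    obtain ⟨h0, h1, h2, -⟩ := key z hz
    refine DifferentiableAt.differentiableWithinAt (DifferentiableAt.add ?_ ?_)
    · exact ((hF'd z).div (hFd 0 z) (h0 0)).clog (hslit _ h2)
    · refine DifferentiableAt.fun_sum fun j _ => ?_
      exact ((hFd j z).div (hFd (j + 1) z) (h0 (j + 1))).clog (hslit _ (h1 j))
  · intro z hz
    obtain ⟨h0, h1, h2, -⟩ := key z hz
    have hne : ∀ w : ℂ, ‖w - 1‖ ≤ 1 / 2 → w ≠ 0 := fun w hw =>
      Complex.slitPlane_ne_zero (hslit w hw)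
    have hprod : ∏ j ∈ Finset.range n, (F j z / F (j + 1) z) = F 0 z := by
      have h3 : ∀ r, ∏ j ∈ Finset.range r, (F j z / F (j + 1) z) = F 0 z / F r z := fun r => by
        induction r with
        | zero => simp [div_self (h0 0)]
        | succ r ih =>
          rw [Finset.prod_range_succ, ih]
          have := h0 r
          have := h0 (r + 1)
          field_simp
      rw [h3, show F n z = 1 by simp [hF], div_one]
    rw [Complex.exp_add, Complex.exp_sum, Complex.exp_log (hne _ h2),
      Finset.prod_congr rfl fun j _ => Complex.exp_log (hne _ (h1 j)), hprod,
      div_mul_cancel₀ _ (h0 0)]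
    simp only [hF', hSc]
  · intro z hz
    obtain ⟨h0, h1, h2, h3⟩ := key z hz
    rw [hvar]
    refine (norm_add_le _ _).trans ?_
    have h4 := hlog _ h2
    have h5 := (norm_sum_le (Finset.range n) fun j => Complex.log (F j z / F (j + 1) z)).trans
      (Finset.sum_le_sum fun j _ => hlog _ (h1 j))
    rw [← Finset.mul_sum] at h5
    linarith

end IsMarkovChain

section ImaginaryAxis

variable {L : ℂ → ℂ} {δ : ℝ}

lemma I_mul_ofReal_mem_ball {t : ℝ} (ht : t ∈ Set.Ioo (-δ) δ) :
    Complex.I * (t : ℂ) ∈ Metric.ball (0 : ℂ) δ := by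
  rw [mem_ball_zero_iff]
  simpa using abs_lt.2 ht

lemma iteratedDeriv_comp_I_mul (hL : DifferentiableOn ℂ L (Metric.ball 0 δ)) (s : ℕ) :
    ∀ t ∈ Set.Ioo (-δ) δ, iteratedDeriv s (fun t : ℝ => L (Complex.I * t)) t
      = Complex.I ^ s * iteratedDeriv s L (Complex.I * t) := by
  induction s with
  | zero => simp
  | succ s ih =>
    intro t ht
    have hev : iteratedDeriv s (fun t : ℝ => L (Complex.I * t)) =ᶠ[nhds t]
        fun t : ℝ => Complex.I ^ s * iteratedDeriv s L (Complex.I * t) :=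
      (isOpen_Ioo.mem_nhds ht |> Filter.eventually_of_mem) ih
    have hana : AnalyticAt ℂ L (Complex.I * t) :=
      hL.analyticAt (Metric.isOpen_ball.mem_nhds (I_mul_ofReal_mem_ball ht))
    have hd : HasDerivAt (iteratedDeriv s L) (iteratedDeriv (s + 1) L (Complex.I * t))
        (Complex.I * t) := by
      rw [iteratedDeriv_succ]
      rw [iteratedDeriv_eq_iterate]
      exact (hana.iterated_deriv s).differentiableAt.hasDerivAt
    have hlin : HasDerivAt (fun w : ℂ => Complex.I * w) Complex.I (t : ℂ) := by
      simpa using (hasDerivAt_id (t : ℂ)).const_mul Complex.I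
    have h1 : HasDerivAt (fun w : ℂ => iteratedDeriv s L (Complex.I * w))
        (iteratedDeriv (s + 1) L (Complex.I * t) * Complex.I) (t : ℂ) :=
      HasDerivAt.comp (t : ℂ) (h₂ := iteratedDeriv s L) hd hlin
    rw [iteratedDeriv_succ, hev.deriv_eq, (h1.comp_ofReal.const_mul (Complex.I ^ s)).deriv]
    ring

lemma contDiffOn_comp_I_mul (hL : DifferentiableOn ℂ L (Metric.ball 0 δ)) :
    ContDiffOn ℝ ((⊤ : ℕ∞) : WithTop ℕ∞) (fun t : ℝ => L (Complex.I * t)) (Set.Ioo (-δ) δ) := by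
  have h1 : ContDiffOn ℝ ((⊤ : ℕ∞) : WithTop ℕ∞) L (Metric.ball 0 δ) :=
    (hL.contDiffOn Metric.isOpen_ball).restrict_scalars ℝ
  have h2 : ContDiff ℝ ((⊤ : ℕ∞) : WithTop ℕ∞) (fun t : ℝ => Complex.I * (t : ℂ)) :=
    contDiff_const.mul Complex.ofRealCLM.contDiff
  exact h1.comp h2.contDiffOn fun t ht => I_mul_ofReal_mem_ball ht

lemma norm_iteratedDeriv_comp_I_mul_le (hL : DifferentiableOn ℂ L (Metric.ball 0 δ)) {M : ℝ}
    (hM : ∀ z ∈ Metric.ball (0 : ℂ) δ, ‖L z‖ ≤ M) (hδ : 0 < δ) (s : ℕ) {t : ℝ}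
    (ht : t ∈ Set.Icc (-(δ / 4)) (δ / 4)) :
    ‖iteratedDeriv s (fun t : ℝ => L (Complex.I * t)) t‖
      ≤ s.factorial * M / (δ / 4) ^ s := by
  have ht' : t ∈ Set.Ioo (-δ) δ := ⟨by linarith [ht.1], by linarith [ht.2]⟩
  have hsub : Metric.closedBall (Complex.I * (t : ℂ)) (δ / 4) ⊆ Metric.ball 0 δ := by
    refine Metric.closedBall_subset_ball' ?_
    have : ‖Complex.I * (t : ℂ)‖ ≤ δ / 4 := by simpa using abs_le.2 ht
    rw [dist_zero_right]
    linarith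
  rw [iteratedDeriv_comp_I_mul hL s t ht', norm_mul, norm_pow, Complex.norm_I, one_pow, one_mul]
  refine Complex.norm_iteratedDeriv_le_of_forall_mem_sphere_norm_le s (by linarith) ?_
    fun z hz => hM z (hsub (Metric.sphere_subset_closedBall hz))
  exact (hL.mono hsub).diffContOnCl_ball subset_rfl

end ImaginaryAxis

lemma centeredCharFun_congr {Ω : Type*} [MeasurableSpace Ω] {μ : Measure Ω} {Y Z : Ω → ℝ}
    (h : Y =ᵐ[μ] Z) (t : ℝ) : centeredCharFun μ Y t = centeredCharFun μ Z t := by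
  rw [centeredCharFun, centeredCharFun, integral_congr_ae h]
  refine integral_congr_ae ?_
  filter_upwards [h] with ω hω
  rw [hω]

theorem log_characteristic_branch_derivative_bounds
    {Ω : Type*} [MeasurableSpace Ω] {𝒳 : ℕ → Type*} [∀ j, MeasurableSpace (𝒳 j)]
    (μ : Measure Ω) [IsProbabilityMeasure μ]
    (X : ∀ j, Ω → 𝒳 j) (P : ∀ j, Kernel (𝒳 j) (𝒳 (j + 1)))
    (hX : IsMarkovChain μ X P)
    (n₀ : ℕ) (hn₀ : 0 < n₀) (γ : ℝ) (hγ : γ ∈ Set.Ioo (0 : ℝ) 1)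
    (m : ∀ j, Measure (𝒳 j)) (hm : ∀ j, IsProbabilityMeasure (m j))
    (hDoeblin : DoeblinMinorization P n₀ γ m)
    (f : ∀ j, 𝒳 j → ℝ) (hf : ∀ j, Measurable (f j))
    (K : ℝ) (hK : ∀ j, ∀ᵐ ω ∂μ, |f j (X j ω)| ≤ K)
    (σ : ℕ → ℝ) (hσ : ∀ n, σ n = √(variance (partialSum X f n) μ))
    (hσ_top : Tendsto σ atTop atTop) :
    ∃ δ₀ : ℝ, 0 < δ₀ ∧ ∃ Λ : ℕ → ℝ → ℂ,
      (∀ n, Λ n 0 = 0) ∧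
      (∀ n, ContDiffOn ℝ ((⊤ : ℕ∞) : WithTop ℕ∞) (Λ n) (Set.Ioo (-δ₀) δ₀)) ∧
      (∀ n, ∀ t ∈ Set.Ioo (-δ₀) δ₀,
        Complex.exp (Λ n t) = centeredCharFun μ (partialSum X f n) t) ∧
      ∀ k : ℕ, 3 ≤ k → ∃ δ C : ℝ, 0 < δ ∧ δ < δ₀ ∧ 0 < C ∧
        ∀ n s : ℕ, s ≤ k → ∀ t ∈ Set.Icc (-δ) δ,
          ‖iteratedDeriv s (Λ n) t‖ ≤ C * σ n ^ 2 := by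
  have hK0 : 0 ≤ K := by
    obtain ⟨ω, hω⟩ := (hK 0).exists
    exact (abs_nonneg _).trans hω
  -- `f j` is bounded only almost surely along the chain, so it is truncated first.
  set F : ∀ j, 𝒳 j → ℝ := fun j x => max (-K) (min K (f j x)) with hF
  have hFK : ∀ j x, |F j x| ≤ K := fun j x =>
    abs_le.2 ⟨le_max_left _ _, max_le (by linarith) (min_le_left _ _)⟩
  have hFb : ∀ j, BddMeas (F j) := fun j =>
    ⟨(measurable_const.max (measurable_const.min (hf j))).stronglyMeasurable, K, hFK j⟩
  have hSF : ∀ n, partialSum X F n =ᵐ[μ] partialSum X f n := fun n => by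
    filter_upwards [ae_all_iff.2 hK] with ω hω
    refine Finset.sum_congr rfl fun j _ => ?_
    have := abs_le.1 (hω j)
    simp only [hF]
    rw [min_eq_right this.2, max_eq_right this.1]
  have hn₀' : (1 : ℝ) ≤ n₀ := by exact_mod_cast hn₀
  have hγ0 := hγ.1
  set B : ℝ := max 1 (2 * K * n₀ / γ) with hBdef
  have hB1 : 1 ≤ B := le_max_left _ _
  have hB : 2 * K * n₀ ≤ γ * B := by
    rw [mul_comm γ, ← div_le_iff₀ hγ0]
    exact le_max_right _ _
  have hτ : 0 < 1 - √(1 - γ) := by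
    rw [sub_pos, Real.sqrt_lt' one_pos]
    linarith
  have hτ1 : 1 - √(1 - γ) ≤ 1 := by linarith [Real.sqrt_nonneg (1 - γ)]
  set δ : ℝ := (1 - √(1 - γ)) / (24 * n₀ * B) with hδdef
  have hδ0 : 0 < δ := by positivity
  have hδ2 : 24 * n₀ * (δ * B) ≤ 1 - √(1 - γ) := by
    rw [hδdef]
    refine le_of_eq ?_
    field_simp
  have hδ1 : δ * B ≤ 1 / 8 := by nlinarith [mul_pos hδ0 (zero_lt_one.trans_le hB1)]
  choose L hL0 hLd hLexp hLb using
    hX.exists_holomorphic_log hn₀ hγ hm hDoeblin hFb hFK hB1 hB hδ1 hδ2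
  refine ⟨δ, hδ0, fun n t => L n (Complex.I * t), fun n => by simp [hL0],
    fun n => contDiffOn_comp_I_mul (hLd n), fun n t ht => ?_, fun k _ => ?_⟩
  · rw [hLexp n _ (I_mul_ofReal_mem_ball ht), ← centeredCharFun_congr (hSF n) t]
    rfl
  · refine ⟨δ / 4, ∑ s ∈ Finset.range (k + 1), s.factorial * 3 / (δ / 4) ^ s, by linarith,
      by linarith, Finset.sum_pos (fun s _ => by positivity) (by simp), fun n s hs t ht => ?_⟩
    have hvar : variance (partialSum X F n) μ = σ n ^ 2 := by
      rw [hσ, Real.sq_sqrt (variance_nonneg _ _), variance_congr (hSF n)]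
    refine (norm_iteratedDeriv_comp_I_mul_le (hLd n) (hLb n) hδ0 s ht).trans ?_
    rw [hvar]
    have h1 : (s.factorial * 3 / (δ / 4) ^ s : ℝ)
        ≤ ∑ s ∈ Finset.range (k + 1), s.factorial * 3 / (δ / 4) ^ s :=
      Finset.single_le_sum (f := fun s : ℕ => (s.factorial * 3 / (δ / 4) ^ s : ℝ))
        (fun s _ => by positivity) (Finset.mem_range.2 (by omega))
    calc s.factorial * (3 * σ n ^ 2) / (δ / 4) ^ s
        = s.factorial * 3 / (δ / 4) ^ s * σ n ^ 2 := by ring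
      _ ≤ _ := mul_le_mul_of_nonneg_right h1 (sq_nonneg _)
end

section
/- Let $(\Omega,\mathcal F,\mathbb P,\theta)$ be an invertible probability-preserving system with $\theta$ mixing. Let $\mathcal X$ be a measurable space, $(\mathcal X_\omega)_{\omega\in\Omega}$ subsets of $\mathcal X$ depending measurably on $\omega$, and $P_\omega(x,\Gamma)$ transition probabilities from $\mathcal X_\omega$ to $\mathcal X_{\theta\omega}$, measurable in $\omega$; set $P_{\omega,n}=P_\omega\circ P_{\theta\omega}\circ\cdots\circ P_{\theta^{n-1}\omega}$ (the first step is made with $P_\omega$). Assume that there are random variables $n_\omega\in\mathbb N$, $\gamma_\omega\in(0,1)$ and probability measures $m_\omega$ on $\mathcal X_\omega$ such that, $\mathbb P$-a.s., for all $x\in\mathcal X_{\theta^{-n_\omega}\omega}$ and all measurable $\Gamma\subseteq\mathcal X_\omega$, $$P_{\theta^{-n_\omega}\omega,\,n_\omega}(x,\Gamma)\ \ge\ \gamma_\omega\, m_\omega(\Gamma).$$ Let $\delta>0$ and let $M\ge 1$ be an integer with $\mathbb P(A_{\delta,M})>0$, where $A_{\delta,M}=\{\omega:\gamma_\omega\ge\delta,\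 n_\omega\le M\}$. Then for $\mathbb P$-a.e. $\omega$ there is a probability measure $\mu_\omega$ on $\mathcal X_\omega$ such that for all $n$, $$\sup_{\Gamma\subseteq\mathcal X_\omega\text{ measurable}}\ \sup_{x\in\mathcal X_{\theta^{-n}\omega}}\bigl|P_{\theta^{-n}\omega,n}(x,\Gamma)-\mu_\omega(\Gamma)\bigr|\ \le\ (1-\delta)^{\sum_{j=1}^{\lfloor n/M\rfloor-1}\mathbf 1_{A_{\delta,M}}(\theta^{-jM}\omega)},$$ where an empty sum is $0$. -/
open MeasureTheory ProbabilityTheory Filter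

/-- The `n`-step transition kernels `P_{ω,n} = P_ω ∘ P_{θω} ∘ ⋯ ∘ P_{θ^{n-1}ω}` of a Markov
chain in the random environment `ω`: the first step is made with `P_ω`, the next one with
`P_{θω}`, and so on. (Mathlib's `η ∘ₖ κ` applies `κ` first.) -/
noncomputable def envKernel {Ω 𝒳 : Type*} [MeasurableSpace 𝒳]
    (θ : Ω → Ω) (P : Ω → Kernel 𝒳 𝒳) : ℕ → Ω → Kernel 𝒳 𝒳
  | 0, _ => Kernel.id
  | n + 1, ω => (envKernel θ P n (θ ω)) ∘ₖ (P ω)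

/-- Mixing of the map `θ` with respect to `Pr`:
`Pr(A ∩ θ^{-n}B) → Pr(A) Pr(B)` for all measurable `A`, `B`. -/
def StrongMixing {Ω : Type*} [MeasurableSpace Ω] (Pr : Measure Ω) (θ : Ω → Ω) : Prop :=
  ∀ A B : Set Ω, MeasurableSet A → MeasurableSet B →
    Tendsto (fun n : ℕ => Pr (A ∩ θ^[n] ⁻¹' B)) atTop (nhds (Pr A * Pr B))

/-- The set `A_{δ,M} = {ω : γ_ω ≥ δ, n_ω ≤ M}`. -/
def goodSet {Ω : Type*} (γ : Ω → ℝ) (N : Ω → ℕ) (δ : ℝ) (M : ℕ) : Set Ω :=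
  {ω | δ ≤ γ ω ∧ N ω ≤ M}

section Minorization

variable {𝒳 : Type*} [MeasurableSpace 𝒳]

/-- Averaging a function against a probability measure carried by a set on which the function takes
values in an interval gives a value in that interval. -/
lemma integral_mem_Icc_of_ae {ν : Measure 𝒳} [IsProbabilityMeasure ν] {f : 𝒳 → ℝ} {a b : ℝ}
    (hf : Integrable f ν) (hab : ∀ᵐ x ∂ν, f x ∈ Set.Icc a b) :
    ∫ x, f x ∂ν ∈ Set.Icc a b := by
  constructor
  · have := integral_mono_ae (integrable_const a) hf (hab.mono fun x hx => hx.1)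
    simpa using this
  · have := integral_mono_ae hf (integrable_const b) (hab.mono fun x hx => hx.2)
    simpa using this

/-- A probability measure that dominates `δ • m` averages an `[a, a + c]`-valued function into a
subinterval of length `(1 - δ) * c` that depends only on `m`. -/
lemma integral_mem_Icc_of_minorization {ν m : Measure 𝒳} [IsProbabilityMeasure ν]
    [IsProbabilityMeasure m] {f : 𝒳 → ℝ} {a c δ : ℝ} (hδ : 0 ≤ δ)
    (hfν : Integrable f ν) (hfm : Integrable f m)
    (hle : ENNReal.ofReal δ • m ≤ ν) (hab : ∀ᵐ x ∂ν, f x ∈ Set.Icc a (a + c)) :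
    ∫ x, f x ∂ν ∈ Set.Icc (δ * ∫ x, f x ∂m + (1 - δ) * a)
      (δ * ∫ x, f x ∂m + (1 - δ) * a + (1 - δ) * c) := by
  have key : ∀ g : 𝒳 → ℝ, Integrable g ν → (∀ᵐ x ∂ν, 0 ≤ g x) →
      δ * ∫ x, g x ∂m ≤ ∫ x, g x ∂ν := by
    intro g hg hg0
    have := integral_mono_measure hle hg0 hg
    rwa [integral_smul_measure, ENNReal.toReal_ofReal hδ, smul_eq_mul] at this
  have h1 := key (fun x => f x - a) (hfν.sub (integrable_const a))
    (hab.mono fun x hx => sub_nonneg.2 hx.1)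
  have h2 := key (fun x => (a + c) - f x) ((integrable_const _).sub hfν)
    (hab.mono fun x hx => sub_nonneg.2 hx.2)
  rw [integral_sub hfν (integrable_const a), integral_sub hfm (integrable_const a)] at h1
  rw [integral_sub (integrable_const _) hfν, integral_sub (integrable_const _) hfm] at h2
  simp only [integral_const, probReal_univ, one_smul] at h1 h2
  constructor <;> nlinarith

lemma integrable_kernel_toReal (κ : Kernel 𝒳 𝒳) [IsMarkovKernel κ] {Γ : Set 𝒳}
    (hΓ : MeasurableSet Γ) (ν : Measure 𝒳) [IsProbabilityMeasure ν] :
    Integrable (fun z => (κ z Γ).toReal) ν :=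
  Integrable.of_bound (κ.measurable_coe hΓ).ennreal_toReal.aestronglyMeasurable 1
    (Eventually.of_forall fun z => by
      rw [Real.norm_of_nonneg ENNReal.toReal_nonneg]
      exact ENNReal.toReal_le_of_le_ofReal zero_le_one (by simpa using prob_le_one))

lemma comp_apply_toReal (κ η : Kernel 𝒳 𝒳) [IsMarkovKernel κ] {Γ : Set 𝒳}
    (hΓ : MeasurableSet Γ) (x : 𝒳) :
    ((κ ∘ₖ η) x Γ).toReal = ∫ z, (κ z Γ).toReal ∂(η x) := by
  rw [Kernel.comp_apply' _ _ _ hΓ, integral_toReal (κ.measurable_coe hΓ).aemeasurable]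
  exact Eventually.of_forall fun z => measure_lt_top _ _

end Minorization

section SetwiseLimit

variable {𝒳 : Type*} [MeasurableSpace 𝒳]

/-- A sequence of probability measures that is Cauchy uniformly over measurable sets converges
setwise to a probability measure. -/
lemma exists_setwise_limit (ν : ℕ → Measure 𝒳) [∀ n, IsProbabilityMeasure (ν n)] (b : ℕ → ℝ)
    (hb : Tendsto b atTop (nhds 0))
    (hν : ∀ n k, n ≤ k → ∀ Γ, MeasurableSet Γ → |(ν n).real Γ - (ν k).real Γ| ≤ b n) :
    ∃ μ : Measure 𝒳, IsProbabilityMeasure μ ∧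
      ∀ Γ, MeasurableSet Γ → Tendsto (fun n => (ν n).real Γ) atTop (nhds (μ.real Γ)) := by
  have hlim : ∀ Γ, ∃ l : ℝ, MeasurableSet Γ → Tendsto (fun n => (ν n).real Γ) atTop (nhds l) := by
    intro Γ
    by_cases hΓ : MeasurableSet Γ
    · have hc : CauchySeq fun n => (ν n).real Γ := by
        refine cauchySeq_of_le_tendsto_0' b (fun n k hnk => ?_) hb
        rw [Real.dist_eq]
        exact hν n k hnk Γ hΓ
      obtain ⟨l, hl⟩ := cauchySeq_tendsto_of_complete hc
      exact ⟨l, fun _ => hl⟩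
    · exact ⟨0, fun h => absurd h hΓ⟩
  choose c hc using hlim
  have hc0 : ∀ Γ, MeasurableSet Γ → 0 ≤ c Γ := fun Γ hΓ =>
    ge_of_tendsto' (hc Γ hΓ) fun n => measureReal_nonneg
  have hcb : ∀ n Γ, MeasurableSet Γ → |(ν n).real Γ - c Γ| ≤ b n := fun n Γ hΓ =>
    le_of_tendsto ((tendsto_const_nhds.sub (hc Γ hΓ)).abs)
      ((eventually_ge_atTop n).mono fun k hk => hν n k hk Γ hΓ)
  have hcempty : c ∅ = 0 :=
    tendsto_nhds_unique (hc ∅ MeasurableSet.empty) (by simp)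
  have hcuniv : c Set.univ = 1 :=
    tendsto_nhds_unique (hc _ MeasurableSet.univ) (by simp)
  have hsum : ∀ f : ℕ → Set 𝒳, (∀ i, MeasurableSet (f i)) → Pairwise (Function.onFun Disjoint f) →
      HasSum (fun i => c (f i)) (c (⋃ i, f i)) := by
    intro f hf hd
    have hU := MeasurableSet.iUnion hf
    have hfin : ∀ s : Finset ℕ, MeasurableSet (⋃ i ∈ s, f i) := fun s =>
      s.measurableSet_biUnion fun i _ => hf i
    have hνs : ∀ n (s : Finset ℕ), ∑ i ∈ s, (ν n).real (f i) = (ν n).real (⋃ i ∈ s, f i) :=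
      fun n s => (measureReal_biUnion_finset (μ := ν n) (fun i _ j _ hij => hd hij) fun i _ => hf i).symm
    have hcs : ∀ s : Finset ℕ, ∑ i ∈ s, c (f i) = c (⋃ i ∈ s, f i) := fun s =>
      tendsto_nhds_unique (tendsto_finsetSum s fun i _ => hc (f i) (hf i))
        (by simpa only [hνs] using hc _ (hfin s))
    have hνsum : ∀ n, HasSum (fun i => (ν n).real (f i)) ((ν n).real (⋃ i, f i)) := by
      intro n
      rw [measureReal_def, measure_iUnion hd hf,
        ENNReal.tsum_toReal_eq fun i => measure_ne_top (ν n) (f i)]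
      exact ENNReal.hasSum_toReal (measure_iUnion (μ := ν n) hd hf ▸ measure_ne_top _ _)
    rw [HasSum, Metric.tendsto_nhds]
    intro ε hε
    obtain ⟨n, hn⟩ := ((tendsto_order.1 hb).2 (ε / 3) (by positivity)).exists
    filter_upwards [Metric.tendsto_nhds.1 (hνsum n) (ε / 3) (by positivity)] with s hs
    rw [hνs, Real.dist_eq] at hs
    rw [hcs, Real.dist_eq]
    have h1 := abs_le.1 (hcb n _ (hfin s))
    have h2 := abs_le.1 (hcb n _ hU)
    have h3 := abs_lt.1 hs
    rw [abs_lt]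
    constructor <;> linarith [h1.1, h1.2, h2.1, h2.2, h3.1, h3.2]
  let μ : Measure 𝒳 := Measure.ofMeasurable (fun Γ _ => ENNReal.ofReal (c Γ)) (by simp [hcempty])
    (fun f hf hd => by
      have := hsum f hf hd
      rw [← this.tsum_eq, ENNReal.ofReal_tsum_of_nonneg (fun i => hc0 _ (hf i)) this.summable])
  have hμ : ∀ Γ, MeasurableSet Γ → μ Γ = ENNReal.ofReal (c Γ) := fun Γ hΓ =>
    Measure.ofMeasurable_apply Γ hΓ
  refine ⟨μ, ⟨by rw [hμ _ MeasurableSet.univ, hcuniv, ENNReal.ofReal_one]⟩, fun Γ hΓ => ?_⟩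
  rw [measureReal_def, hμ Γ hΓ, ENNReal.toReal_ofReal (hc0 Γ hΓ)]
  exact hc Γ hΓ

end SetwiseLimit

section Recurrence

variable {Ω : Type*} [MeasurableSpace Ω]

/-- Under a mixing automorphism, almost every point visits a set of positive measure infinitely
often in the past along the multiples of `M`. -/
lemma StrongMixing.ae_frequently_symm_iterate_mem {Pr : Measure Ω} [IsProbabilityMeasure Pr]
    {θ : Ω ≃ᵐ Ω} (hmix : StrongMixing Pr θ) {A : Set Ω}
    (hAm : MeasurableSet A) (hA : 0 < Pr A) {M : ℕ} (hM : 1 ≤ M) :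
    ∀ᵐ ω ∂Pr, ∀ J, ∃ j, J ≤ j ∧ θ.symm^[j * M] ω ∈ A := by
  rw [ae_all_iff]
  intro J
  have hmeas : ∀ j, MeasurableSet (θ.symm^[j * M] ⁻¹' A) := fun j =>
    θ.symm.measurable.iterate _ hAm
  set C : Set Ω := {ω | ¬ ∃ j, J ≤ j ∧ θ.symm^[j * M] ω ∈ A} with hC
  have hCm : MeasurableSet C := by
    have : C = ⋂ j, ⋂ (_ : J ≤ j), (θ.symm^[j * M] ⁻¹' A)ᶜ := by
      ext ω
      simp [hC]
    rw [this]
    exact MeasurableSet.iInter fun j => MeasurableSet.iInter fun _ => (hmeas j).compl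
  have hzero : ∀ j, J ≤ j → Pr (A ∩ θ^[j * M] ⁻¹' C) = 0 := by
    intro j hj
    have : A ∩ θ^[j * M] ⁻¹' C = ∅ := by
      rw [Set.eq_empty_iff_forall_notMem]
      rintro ω ⟨hωA, hωC⟩
      refine hωC ⟨j, hj, ?_⟩
      rwa [(Function.LeftInverse.iterate θ.symm_apply_apply (j * M)) ω]
    rw [this, measure_empty]
  have hlim : Tendsto (fun j : ℕ => Pr (A ∩ θ^[j * M] ⁻¹' C)) atTop (nhds (Pr A * Pr C)) :=
    (hmix A C hAm hCm).comp (tendsto_atTop_mono (fun j => Nat.le_mul_of_pos_right j hM) tendsto_id)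
  have h0 : Pr A * Pr C = 0 := tendsto_nhds_unique hlim
    (tendsto_const_nhds.congr' ((eventually_ge_atTop J).mono fun j hj => (hzero j hj).symm))
  exact (mul_eq_zero.1 h0).resolve_left hA.ne'

/-- The number of visits up to time `K` of a sequence with infinitely many visits is unbounded. -/
lemma tendsto_sum_indicator_atTop {α : Type*} (A : Set α) (u : ℕ → α)
    (h : ∀ J, ∃ j, J ≤ j ∧ u j ∈ A) :
    Tendsto (fun K => ∑ j ∈ Finset.Icc 1 K, A.indicator (fun _ => (1 : ℕ)) (u j)) atTop atTop := by
  have hmono : Monotone fun K => ∑ j ∈ Finset.Icc 1 K, A.indicator (fun _ => (1 : ℕ)) (u j) :=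
    fun K L hKL => Finset.sum_le_sum_of_subset (Finset.Icc_subset_Icc_right hKL)
  refine tendsto_atTop_atTop_of_monotone hmono fun r => ?_
  induction r with
  | zero => exact ⟨0, Nat.zero_le _⟩
  | succ r ih =>
    obtain ⟨K, hK⟩ := ih
    obtain ⟨j, hj, hjA⟩ := h (K + 1)
    obtain ⟨i, rfl⟩ : ∃ i, j = i + 1 := ⟨j - 1, by omega⟩
    refine ⟨i + 1, ?_⟩
    rw [Finset.sum_Icc_succ_top (by omega), Set.indicator_of_mem hjA]
    exact Nat.add_le_add_right (hK.trans (hmono (by omega))) 1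

end Recurrence

section EnvKernel

variable {Ω 𝒳 : Type*} [MeasurableSpace 𝒳]

lemma isMarkovKernel_envKernel {θ : Ω → Ω} {P : Ω → Kernel 𝒳 𝒳}
    (hP : ∀ ω, IsMarkovKernel (P ω)) (n : ℕ) (ω : Ω) : IsMarkovKernel (envKernel θ P n ω) := by
  induction n generalizing ω with
  | zero => rw [envKernel]; infer_instance
  | succ n ih =>
    have := ih (θ ω)
    rw [envKernel]; infer_instance

lemma envKernel_add (θ : Ω → Ω) (P : Ω → Kernel 𝒳 𝒳) (k n : ℕ) (ω : Ω) :
    envKernel θ P (k + n) ω = envKernel θ P n (θ^[k] ω) ∘ₖ envKernel θ P k ω := by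
  induction k generalizing ω with
  | zero => simp [envKernel]
  | succ k ih =>
    rw [Nat.succ_add, envKernel, ih, envKernel, Kernel.comp_assoc, Function.iterate_succ_apply]

/-- The fibres are preserved: a chain started in `Xs ω` is in `Xs (θ^k ω)` at time `k`. -/
lemma envKernel_apply_fibre {θ : Ω → Ω} {P : Ω → Kernel 𝒳 𝒳} (hP : ∀ ω, IsMarkovKernel (P ω))
    {Xs : Ω → Set 𝒳} (hXs : ∀ ω, MeasurableSet (Xs ω)) (k : ℕ) (ω : Ω)
    (hfib : ∀ i < k, ∀ x ∈ Xs (θ^[i] ω), P (θ^[i] ω) x (Xs (θ (θ^[i] ω))) = 1)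
    {x : 𝒳} (hx : x ∈ Xs ω) : ∀ᵐ z ∂(envKernel θ P k ω x), z ∈ Xs (θ^[k] ω) := by
  induction k generalizing ω x with
  | zero =>
    rw [envKernel, Kernel.id_apply]
    exact (ae_dirac_iff (hXs ω)).2 hx
  | succ k ih =>
    rw [envKernel, Function.iterate_succ_apply]
    refine Kernel.ae_comp_of_ae_ae (hXs _) ?_
    have h1 : ∀ᵐ y ∂(P ω x), y ∈ Xs (θ ω) := by
      have := hP ω
      exact (mem_ae_iff_prob_eq_one (hXs _)).2 (hfib 0 (Nat.succ_pos k) x hx)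
    filter_upwards [h1] with y hy
    refine ih (θ ω) (fun i hi => ?_) hy
    simpa only [← Function.iterate_succ_apply] using hfib (i + 1) (Nat.succ_lt_succ hi)

end EnvKernel

section Past

variable {Ω 𝒳 : Type*} [MeasurableSpace Ω] [MeasurableSpace 𝒳]

lemma iterate_symm_iterate_add (θ : Ω ≃ᵐ Ω) (k n : ℕ) (ω : Ω) :
    θ^[k] (θ.symm^[n + k] ω) = θ.symm^[n] ω := by
  rw [Nat.add_comm, Function.iterate_add_apply]
  exact (Function.LeftInverse.iterate θ.apply_symm_apply k) _

/-- Concatenation of a chain from time `-(n + k)` to time `-n` and from there to time `0`. -/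
lemma envKernel_symm_iterate_add (θ : Ω ≃ᵐ Ω) (P : Ω → Kernel 𝒳 𝒳) (n k : ℕ) (ω : Ω) :
    envKernel θ P (n + k) (θ.symm^[n + k] ω) =
      envKernel θ P n (θ.symm^[n] ω) ∘ₖ envKernel θ P k (θ.symm^[n + k] ω) := by
  conv_lhs => rw [Nat.add_comm n k, envKernel_add, Nat.add_comm k n, iterate_symm_iterate_add]

/-- A chain started at time `-(n + k)` in its fibre is in its fibre at time `-n`. -/
lemma envKernel_symm_iterate_fibre {θ : Ω ≃ᵐ Ω} {P : Ω → Kernel 𝒳 𝒳}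
    (hP : ∀ ω, IsMarkovKernel (P ω)) {Xs : Ω → Set 𝒳} (hXs : ∀ ω, MeasurableSet (Xs ω)) {ω : Ω}
    (hfib : ∀ j, ∀ x ∈ Xs (θ.symm^[j] ω), P (θ.symm^[j] ω) x (Xs (θ (θ.symm^[j] ω))) = 1)
    (n k : ℕ) {x : 𝒳} (hx : x ∈ Xs (θ.symm^[n + k] ω)) :
    ∀ᵐ z ∂(envKernel θ P k (θ.symm^[n + k] ω) x), z ∈ Xs (θ.symm^[n] ω) := by
  rw [← iterate_symm_iterate_add θ k n ω]
  refine envKernel_apply_fibre hP hXs k _ (fun i hi => ?_) hx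
  obtain ⟨l, rfl⟩ : ∃ l, k = l + i := ⟨k - i, by omega⟩
  rw [← Nat.add_assoc, iterate_symm_iterate_add θ i (n + l) ω]
  exact hfib _

/-- Values of the `n`-step transition probabilities confine the later ones. -/
lemma envKernel_mem_Icc_add {θ : Ω ≃ᵐ Ω} {P : Ω → Kernel 𝒳 𝒳}
    (hP : ∀ ω, IsMarkovKernel (P ω)) {Xs : Ω → Set 𝒳} (hXs : ∀ ω, MeasurableSet (Xs ω)) {ω : Ω}
    (hfib : ∀ j, ∀ x ∈ Xs (θ.symm^[j] ω), P (θ.symm^[j] ω) x (Xs (θ (θ.symm^[j] ω))) = 1)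
    {Γ : Set 𝒳} (hΓ : MeasurableSet Γ) {n : ℕ} {a b : ℝ}
    (hab : ∀ x ∈ Xs (θ.symm^[n] ω),
      (envKernel θ P n (θ.symm^[n] ω) x Γ).toReal ∈ Set.Icc a b) (k : ℕ)
    {x : 𝒳} (hx : x ∈ Xs (θ.symm^[n + k] ω)) :
    (envKernel θ P (n + k) (θ.symm^[n + k] ω) x Γ).toReal ∈ Set.Icc a b := by
  have := isMarkovKernel_envKernel (θ := θ) hP n (θ.symm^[n] ω)
  have := isMarkovKernel_envKernel (θ := θ) hP k (θ.symm^[n + k] ω)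
  rw [envKernel_symm_iterate_add, comp_apply_toReal _ _ hΓ]
  exact integral_mem_Icc_of_ae (integrable_kernel_toReal _ hΓ _)
    ((envKernel_symm_iterate_fibre hP hXs hfib n k hx).mono hab)

/-- The Doeblin minorization at a time `-n` at which the environment is good, over a block of
`M` steps. -/
lemma smul_le_envKernel_of_mem_goodSet {θ : Ω ≃ᵐ Ω} {P : Ω → Kernel 𝒳 𝒳}
    (hP : ∀ ω, IsMarkovKernel (P ω)) {Xs : Ω → Set 𝒳} (hXs : ∀ ω, MeasurableSet (Xs ω)) {ω : Ω}
    (hfib : ∀ j, ∀ x ∈ Xs (θ.symm^[j] ω), P (θ.symm^[j] ω) x (Xs (θ (θ.symm^[j] ω))) = 1)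
    {N : Ω → ℕ} {γ : Ω → ℝ} {m : Ω → Measure 𝒳} [IsProbabilityMeasure (m ω)]
    (hm_supp : m ω (Xs ω) = 1)
    (hDoeb : ∀ x ∈ Xs (θ.symm^[N ω] ω), ∀ Γ : Set 𝒳, MeasurableSet Γ → Γ ⊆ Xs ω →
      ENNReal.ofReal (γ ω) * m ω Γ ≤ envKernel θ P (N ω) (θ.symm^[N ω] ω) x Γ)
    {δ : ℝ} {M : ℕ} (hω : ω ∈ goodSet γ N δ M) {x : 𝒳} (hx : x ∈ Xs (θ.symm^[M] ω)) :
    ENNReal.ofReal δ • m ω ≤ envKernel θ P M (θ.symm^[M] ω) x := by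
  obtain ⟨hδγ, hNM⟩ := hω
  obtain ⟨k, rfl⟩ := Nat.exists_eq_add_of_le hNM
  have := isMarkovKernel_envKernel (θ := θ) hP k (θ.symm^[N ω + k] ω)
  refine Measure.le_iff.2 fun Γ hΓ => ?_
  have hmΓ : m ω (Γ ∩ Xs ω) = m ω Γ :=
    measure_congr (inter_ae_eq_left_of_ae_eq_univ
      (eventuallyEq_univ.2 ((mem_ae_iff_prob_eq_one (hXs ω)).2 hm_supp)))
  rw [envKernel_symm_iterate_add, Kernel.comp_apply' _ _ _ hΓ, Measure.smul_apply, smul_eq_mul]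
  calc ENNReal.ofReal δ * m ω Γ
      = ∫⁻ _, ENNReal.ofReal δ * m ω Γ ∂(envKernel θ P k (θ.symm^[N ω + k] ω) x) := by simp
    _ ≤ _ := by
      refine lintegral_mono_ae ?_
      filter_upwards [envKernel_symm_iterate_fibre hP hXs hfib (N ω) k hx] with z hz
      calc ENNReal.ofReal δ * m ω Γ
          ≤ ENNReal.ofReal (γ ω) * m ω (Γ ∩ Xs ω) := by
            rw [hmΓ]; gcongr
        _ ≤ envKernel θ P (N ω) (θ.symm^[N ω] ω) z (Γ ∩ Xs ω) :=
            hDoeb z hz _ (hΓ.inter (hXs ω)) Set.inter_subset_right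
        _ ≤ _ := measure_mono Set.inter_subset_left

/-- The transition probabilities into `Γ` from time `-n` to time `0` lie in an interval whose
length decays geometrically in the number of visits to the good set. -/
lemma exists_envKernel_mem_Icc {θ : Ω ≃ᵐ Ω} {P : Ω → Kernel 𝒳 𝒳}
    (hP : ∀ ω, IsMarkovKernel (P ω)) {Xs : Ω → Set 𝒳} (hXs : ∀ ω, MeasurableSet (Xs ω)) {ω : Ω}
    (hfib : ∀ j, ∀ x ∈ Xs (θ.symm^[j] ω), P (θ.symm^[j] ω) x (Xs (θ (θ.symm^[j] ω))) = 1)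
    {N : Ω → ℕ} {γ : Ω → ℝ} {m : Ω → Measure 𝒳} (hm : ∀ ω, IsProbabilityMeasure (m ω))
    {δ : ℝ} (hδ : 0 ≤ δ) {M : ℕ}
    (hmin : ∀ j, θ.symm^[j] ω ∈ goodSet γ N δ M → ∀ x ∈ Xs (θ.symm^[j + M] ω),
      ENNReal.ofReal δ • m (θ.symm^[j] ω) ≤ envKernel θ P M (θ.symm^[j + M] ω) x)
    {Γ : Set 𝒳} (hΓ : MeasurableSet Γ) (n : ℕ) :
    ∃ a : ℝ, ∀ x ∈ Xs (θ.symm^[n] ω), (envKernel θ P n (θ.symm^[n] ω) x Γ).toReal ∈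
      Set.Icc a (a + (1 - δ) ^ (∑ j ∈ Finset.Icc 1 (n / M - 1),
        (goodSet γ N δ M).indicator (fun _ => (1 : ℕ)) (θ.symm^[j * M] ω))) := by
  have hblock : ∀ q : ℕ, ∃ a : ℝ, ∀ x ∈ Xs (θ.symm^[q * M] ω),
      (envKernel θ P (q * M) (θ.symm^[q * M] ω) x Γ).toReal ∈
        Set.Icc a (a + (1 - δ) ^ (∑ j ∈ Finset.Icc 1 (q - 1),
          (goodSet γ N δ M).indicator (fun _ => (1 : ℕ)) (θ.symm^[j * M] ω))) := by
    intro q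
    induction q with
    | zero =>
      refine ⟨0, fun x _ => ⟨ENNReal.toReal_nonneg, ?_⟩⟩
      have := isMarkovKernel_envKernel (θ := θ) hP (0 * M) (θ.symm^[0 * M] ω)
      exact measureReal_le_one.trans (by simp)
    | succ q ih =>
      obtain ⟨a, ha⟩ := ih
      by_cases hq : q ≠ 0 ∧ θ.symm^[q * M] ω ∈ goodSet γ N δ M
      · obtain ⟨hq0, hgood⟩ := hq
        obtain ⟨p, rfl⟩ := Nat.exists_eq_succ_of_ne_zero hq0
        have := isMarkovKernel_envKernel (θ := θ) hP ((p + 1) * M) (θ.symm^[(p + 1) * M] ω)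
        refine ⟨δ * ∫ z, (envKernel θ P ((p + 1) * M) (θ.symm^[(p + 1) * M] ω) z Γ).toReal
          ∂(m (θ.symm^[(p + 1) * M] ω)) + (1 - δ) * a, fun x hx => ?_⟩
        rw [Nat.succ_mul (p + 1)] at hx ⊢
        have := isMarkovKernel_envKernel (θ := θ) hP M (θ.symm^[(p + 1) * M + M] ω)
        rw [envKernel_symm_iterate_add, comp_apply_toReal _ _ hΓ, Nat.add_sub_cancel,
          Finset.sum_Icc_succ_top (by omega), Set.indicator_of_mem hgood, pow_succ']
        exact integral_mem_Icc_of_minorization hδ (integrable_kernel_toReal _ hΓ _)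
          (integrable_kernel_toReal _ hΓ _) (hmin _ hgood x hx)
          ((envKernel_symm_iterate_fibre hP hXs hfib _ M hx).mono ha)
      · refine ⟨a, fun x hx => ?_⟩
        have hsum : ∑ j ∈ Finset.Icc 1 (q + 1 - 1),
            (goodSet γ N δ M).indicator (fun _ => (1 : ℕ)) (θ.symm^[j * M] ω) =
            ∑ j ∈ Finset.Icc 1 (q - 1),
            (goodSet γ N δ M).indicator (fun _ => (1 : ℕ)) (θ.symm^[j * M] ω) := by
          rcases q with _ | p
          · rfl
          · rw [Nat.add_sub_cancel, Finset.sum_Icc_succ_top (by omega),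
              Set.indicator_of_notMem fun h => hq ⟨Nat.succ_ne_zero p, h⟩, Nat.add_zero,
              Nat.add_sub_cancel]
        rw [hsum]
        rw [Nat.succ_mul] at hx ⊢
        exact envKernel_mem_Icc_add hP hXs hfib hΓ ha M hx
  obtain ⟨a, ha⟩ := hblock (n / M)
  refine ⟨a, fun x hx => ?_⟩
  have hn : n / M * M + n % M = n := Nat.div_add_mod' n M
  have h := fun hx => envKernel_mem_Icc_add hP hXs hfib hΓ ha (n % M) (x := x) hx
  rw [hn] at h
  exact h hx

end Past

/-- Random geometric ergodicity through the visits of the past of `ω` to the good set.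
The transition probabilities from `Xs ω` to `Xs (θ ω)` are given by kernels on the ambient
space `𝒳` which, started in `Xs ω`, are carried by `Xs (θ ω)`; their values outside `Xs ω`
play no role. The negative powers `θ^{-k}` are the iterates of `θ.symm`. -/
theorem random_geometric_ergodicity_hits
    {Ω 𝒳 : Type*} [MeasurableSpace Ω] [MeasurableSpace 𝒳]
    (Pr : Measure Ω) [IsProbabilityMeasure Pr]
    (θ : Ω ≃ᵐ Ω) (hθ : MeasurePreserving θ Pr Pr) (hmix : StrongMixing Pr θ)
    (Xs : Ω → Set 𝒳) (hXs : MeasurableSet {p : Ω × 𝒳 | p.2 ∈ Xs p.1})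
    (P : Ω → Kernel 𝒳 𝒳) (hPMarkov : ∀ ω, IsMarkovKernel (P ω))
    (hPmeas : ∀ (x : 𝒳) (Γ : Set 𝒳), MeasurableSet Γ → Measurable fun ω => P ω x Γ)
    (hPfib : ∀ᵐ ω ∂Pr, ∀ x ∈ Xs ω, P ω x (Xs (θ ω)) = 1)
    (N : Ω → ℕ) (hN : Measurable N)
    (γ : Ω → ℝ) (hγ : Measurable γ) (hγ01 : ∀ ω, γ ω ∈ Set.Ioo (0 : ℝ) 1)
    (m : Ω → Measure 𝒳) (hm : ∀ ω, IsProbabilityMeasure (m ω))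
    (hm_supp : ∀ᵐ ω ∂Pr, m ω (Xs ω) = 1)
    (hDoeb : ∀ᵐ ω ∂Pr, ∀ x ∈ Xs (θ.symm^[N ω] ω), ∀ Γ : Set 𝒳, MeasurableSet Γ → Γ ⊆ Xs ω →
      ENNReal.ofReal (γ ω) * m ω Γ ≤ envKernel θ P (N ω) (θ.symm^[N ω] ω) x Γ)
    (δ : ℝ) (hδ : 0 < δ) (M : ℕ) (hM : 1 ≤ M)
    (hA : 0 < Pr (goodSet γ N δ M)) :
    ∀ᵐ ω ∂Pr, ∃ μ : Measure 𝒳, IsProbabilityMeasure μ ∧ μ (Xs ω) = 1 ∧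
      ∀ n : ℕ, ∀ x ∈ Xs (θ.symm^[n] ω), ∀ Γ : Set 𝒳, MeasurableSet Γ → Γ ⊆ Xs ω →
        |(envKernel θ P n (θ.symm^[n] ω) x Γ).toReal - (μ Γ).toReal|
          ≤ (1 - δ) ^ (∑ j ∈ Finset.Icc 1 (n / M - 1),
              (goodSet γ N δ M).indicator (fun _ => (1 : ℕ)) (θ.symm^[j * M] ω)) := by
  have hXsm : ∀ ω, MeasurableSet (Xs ω) := fun ω => measurable_prodMk_left hXs
  have hAm : MeasurableSet (goodSet γ N δ M) :=
    (measurableSet_le measurable_const hγ).inter (measurableSet_le hN measurable_const)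
  have hδ1 : δ < 1 := by
    obtain ⟨ω, hω⟩ := nonempty_of_measure_ne_zero hA.ne'
    exact hω.1.trans_lt (hγ01 ω).2
  have past : ∀ {p : Ω → Prop}, (∀ᵐ ω ∂Pr, p ω) → ∀ᵐ ω ∂Pr, ∀ j : ℕ, p (θ.symm^[j] ω) :=
    fun h => ae_all_iff.2 fun j =>
      ((MeasurePreserving.symm θ hθ).iterate j).quasiMeasurePreserving.ae h
  filter_upwards [past hPfib, past hm_supp, past hDoeb,
    hmix.ae_frequently_symm_iterate_mem hAm hA hM] with ω hfib hsupp hdoeb hfreq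
  have hmin : ∀ j, θ.symm^[j] ω ∈ goodSet γ N δ M → ∀ x ∈ Xs (θ.symm^[j + M] ω),
      ENNReal.ofReal δ • m (θ.symm^[j] ω) ≤ envKernel θ P M (θ.symm^[j + M] ω) x := by
    intro j hj x hx
    rw [Nat.add_comm, Function.iterate_add_apply] at hx ⊢
    refine smul_le_envKernel_of_mem_goodSet hPMarkov hXsm (fun i => ?_) (hsupp j) (hdoeb j) hj hx
    simpa only [← Function.iterate_add_apply] using hfib (i + j)
  set b : ℕ → ℝ := fun n => (1 - δ) ^ (∑ j ∈ Finset.Icc 1 (n / M - 1),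
    (goodSet γ N δ M).indicator (fun _ => (1 : ℕ)) (θ.symm^[j * M] ω)) with hb
  have hosc : ∀ n k, n ≤ k → ∀ x ∈ Xs (θ.symm^[n] ω), ∀ y ∈ Xs (θ.symm^[k] ω),
      ∀ Γ, MeasurableSet Γ → |(envKernel θ P n (θ.symm^[n] ω) x Γ).toReal -
        (envKernel θ P k (θ.symm^[k] ω) y Γ).toReal| ≤ b n := by
    intro n k hnk x hx y hy Γ hΓ
    obtain ⟨l, rfl⟩ := Nat.exists_eq_add_of_le hnk
    obtain ⟨a, ha⟩ := exists_envKernel_mem_Icc hPMarkov hXsm hfib hm hδ.le hmin hΓ n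
    have h1 := ha x hx
    have h2 := envKernel_mem_Icc_add hPMarkov hXsm hfib hΓ ha l hy
    rw [abs_le]
    constructor <;> linarith [h1.1, h1.2, h2.1, h2.2]
  have hblim : Tendsto b atTop (nhds 0) := by
    refine (tendsto_pow_atTop_nhds_zero_of_lt_one (by linarith) (by linarith)).comp
      ((tendsto_sum_indicator_atTop _ (fun j => θ.symm^[j * M] ω) hfreq).comp ?_)
    exact (tendsto_sub_atTop_nat 1).comp (Nat.tendsto_div_const_atTop (by omega))
  have hne : ∀ n, (Xs (θ.symm^[n] ω)).Nonempty := fun n =>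
    nonempty_of_measure_ne_zero (by rw [hsupp n]; exact one_ne_zero)
  choose x hx using hne
  have hprob := fun n => (isMarkovKernel_envKernel (θ := θ) hPMarkov n
    (θ.symm^[n] ω)).isProbabilityMeasure (x n)
  obtain ⟨μ, hμ, hlim⟩ := exists_setwise_limit (fun n => envKernel θ P n (θ.symm^[n] ω) (x n)) b
    hblim fun n k hnk Γ hΓ => hosc n k hnk _ (hx n) _ (hx k) Γ hΓ
  refine ⟨μ, hμ, ?_, fun n y hy Γ hΓ _ => ?_⟩
  · have h1 : ∀ n, (envKernel θ P n (θ.symm^[n] ω) (x n)).real (Xs ω) = 1 := by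
      intro n
      have h := fun h => envKernel_symm_iterate_fibre hPMarkov hXsm hfib 0 n (x := x n) h
      rw [Nat.zero_add] at h
      rw [measureReal_def, (mem_ae_iff_prob_eq_one (hXsm ω)).1 (h (hx n)), ENNReal.toReal_one]
    have h2 := hlim _ (hXsm ω)
    simp only [h1] at h2
    have h3 : μ.real (Xs ω) = 1 := tendsto_nhds_unique h2 tendsto_const_nhds
    rwa [measureReal_def, ENNReal.toReal_eq_one_iff] at h3
  · exact le_of_tendsto ((tendsto_const_nhds.sub (hlim Γ hΓ)).abs)
      ((eventually_ge_atTop n).mono fun k hk => hosc n k hk y hy _ (hx k) Γ hΓ)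
end
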